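/- arXiv:0805.4309 — 3 statements merged into one kernel-verified Lean document; each statement's English description precedes it below -/
import Mathlib

section
/- For every real q > 1 there exists a constant B > 0, depending only on q, with the following property. Let λ > 0 and let f : ℝ → ℂ be a Schwartz function whose Fourier transform f̂ is supported in [−2λ, 2λ]. Then for all real numbers τ' ≤ τ'', ∫_{τ'}^{τ''} |f'(t)|² dt ≤ B λ² Σ_{ℓ ∈ ℤ} (1+|ℓ|)^{-q} ∫_{τ'+ℓ/λ}^{τ''+(ℓ+1)/λ} |f(t)|² dt. -/
open MeasureTheory Real

/-- The Fourier transform normalized as `f̂(ω) = (2π)⁻¹ ∫ f(t) e^{-iωt} dt`. -/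
noncomputable def fourierTf (f : ℝ → ℂ) (ω : ℝ) : ℂ :=
  ((2 * Real.pi)⁻¹ : ℝ) * ∫ t : ℝ, f t * Complex.exp (-(Complex.I * (ω * t)))

/-!
A function `f` whose spectrum lies in a fixed ball satisfies `f'(t) = ∫ K(v) f(t + v) dv`, where `K`
is the Fourier transform of a Schwartz function that agrees with the symbol `2πiξ` of `d/dt` on that
ball. By Cauchy–Schwarz, `|f'(t)|² ≤ ‖K‖₁ ∫ |K(v)| |f(t + v)|² dv`. Integrating in `t`, exchanging
the integrals and cutting the range of `v` into unit intervals, on which `|K|` decays rapidly, gives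
the estimate for `λ = 1`. The estimate for general `λ` follows by dilation.
-/

open Set Metric
open scoped SchwartzMap FourierTransform ContDiff

section Integrals

variable {α : Type*} [MeasurableSpace α] {μ : Measure α}

lemma sq_integral_mul_le {w g : α → ℝ} (hw_nonneg : ∀ x, 0 ≤ w x) (hw : Integrable w μ)
    (hwg : Integrable (fun x ↦ w x * g x ^ 2) μ) :
    (∫ x, w x * g x ∂μ) ^ 2 ≤ (∫ x, w x ∂μ) * ∫ x, w x * g x ^ 2 ∂μ := by
  have hwg_nonneg : 0 ≤ ∫ x, w x * g x ^ 2 ∂μ :=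
    integral_nonneg fun x ↦ mul_nonneg (hw_nonneg x) (sq_nonneg _)
  by_cases h : Integrable (fun x ↦ w x * g x) μ
  · have quadratic_nonneg (s : ℝ) : 0 ≤ (∫ x, w x ∂μ) * (s * s) +
        (-2 * ∫ x, w x * g x ∂μ) * s + ∫ x, w x * g x ^ 2 ∂μ := by
      calc
        0 ≤ ∫ x, w x * (s - g x) ^ 2 ∂μ :=
          integral_nonneg fun x ↦ mul_nonneg (hw_nonneg x) (sq_nonneg _)
        _ = ∫ x, (s * s) * w x + (-2 * s) * (w x * g x) + w x * g x ^ 2 ∂μ :=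
          integral_congr_ae (.of_forall fun x ↦ by ring)
        _ = _ := by
          rw [integral_add (by fun_prop) hwg, integral_add (by fun_prop) (by fun_prop),
            integral_const_mul, integral_const_mul]
          ring
    have := discrim_le_zero quadratic_nonneg
    rw [discrim] at this
    linarith
  · rw [integral_undef h, zero_pow two_ne_zero]
    exact mul_nonneg (integral_nonneg hw_nonneg) hwg_nonneg

lemma norm_integral_smul_sq_le {𝕜 E : Type*} [NormedRing 𝕜] [NormedAddCommGroup E]
    [NormedSpace ℝ E] [Module 𝕜 E] [NormSMulClass 𝕜 E] {k : α → 𝕜} {F : α → E}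
    (hk : Integrable k μ) (hkF : Integrable (fun x ↦ ‖k x‖ * ‖F x‖ ^ 2) μ) :
    ‖∫ x, k x • F x ∂μ‖ ^ 2 ≤ (∫ x, ‖k x‖ ∂μ) * ∫ x, ‖k x‖ * ‖F x‖ ^ 2 ∂μ := by
  calc
    ‖∫ x, k x • F x ∂μ‖ ^ 2 ≤ (∫ x, ‖k x‖ * ‖F x‖ ∂μ) ^ 2 := by
      gcongr
      simpa only [norm_smul] using norm_integral_le_integral_norm (μ := μ) (fun x ↦ k x • F x)
    _ ≤ _ := sq_integral_mul_le (fun x ↦ norm_nonneg _) hk.norm hkF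

variable {𝕜 : Type*} [RCLike 𝕜]

lemma integrable_prod_mul_comp_add {G : Type*} [MeasurableSpace G] [AddGroup G] [MeasurableAdd₂ G]
    {μ ν : Measure G} [SFinite μ] [SFinite ν] [μ.IsAddRightInvariant] {w g : G → 𝕜}
    (hw : Integrable w ν) (hg : Integrable g μ) :
    Integrable (fun p : G × G ↦ w p.2 * g (p.1 + p.2)) (μ.prod ν) :=
  (measurePreserving_add_prod μ ν).integrable_comp_of_integrable
    (g := fun p : G × G ↦ w p.2 * g p.1) <| by
      simpa only [mul_comm] using hg.mul_prod hw

variable {w g : ℝ → 𝕜}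

lemma integrable_restrict_prod_mul_comp_add (hw : Integrable w) (hg : Integrable g) (s : Set ℝ) :
    Integrable (fun p : ℝ × ℝ ↦ w p.2 * g (p.1 + p.2)) ((volume.restrict s).prod volume) :=
  (integrable_prod_mul_comp_add hw hg).mono_measure
    (Measure.prod_mono Measure.restrict_le_self le_rfl)

lemma integrable_mul_intervalIntegral_comp_add (hw : Integrable w) (hg : Integrable g) (a b : ℝ) :
    Integrable fun v ↦ w v * ∫ t in (a + v)..(b + v), g t := by
  have hslice (v : ℝ) : w v * ∫ t in (a + v)..(b + v), g t =
      (if a ≤ b then 1 else -1 : ℝ) • ∫ t in uIoc a b, w v * g (t + v) := by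
    rw [← intervalIntegral.intervalIntegral_eq_integral_uIoc, intervalIntegral.integral_const_mul,
      intervalIntegral.integral_comp_add_right]
  simp only [hslice]
  exact (integrable_restrict_prod_mul_comp_add hw hg (uIoc a b)).integral_prod_right.smul
    (if a ≤ b then 1 else -1 : ℝ)

lemma intervalIntegral_integral_mul_comp_add (hw : Integrable w) (hg : Integrable g) (a b : ℝ) :
    ∫ t in a..b, ∫ v, w v * g (t + v) = ∫ v, w v * ∫ t in (a + v)..(b + v), g t := by
  rw [intervalIntegral_integral_swap]
  · simp only [intervalIntegral.integral_const_mul, intervalIntegral.integral_comp_add_right]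
  · exact integrable_restrict_prod_mul_comp_add hw hg _

lemma integral_le_tsum_of_forall_mem_Icc_le {φ : ℝ → ℝ} {c : ℤ → ℝ} (hφ : Integrable φ)
    (hc : Summable c) (hφc : ∀ ℓ : ℤ, ∀ v ∈ Icc (ℓ : ℝ) (ℓ + 1), φ v ≤ c ℓ) :
    ∫ v, φ v ≤ ∑' ℓ, c ℓ := by
  have hsum : HasSum (fun ℓ : ℤ ↦ ∫ v in (ℓ : ℝ)..(ℓ + 1), φ v) (∫ v, φ v) := by
    simpa only [zero_add] using hφ.hasSum_intervalIntegral 0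
  refine hasSum_le (fun ℓ ↦ ?_) hsum hc.hasSum
  calc
    ∫ v in (ℓ : ℝ)..(ℓ + 1), φ v ≤ ∫ _ in (ℓ : ℝ)..(ℓ + 1), c ℓ :=
      intervalIntegral.integral_mono_on (by linarith) hφ.intervalIntegrable
        intervalIntegrable_const (hφc ℓ)
    _ = c ℓ := by simp

end Integrals

lemma summable_one_add_abs_int_rpow {s : ℝ} (hs : s < -1) :
    Summable fun ℓ : ℤ ↦ (1 + |(ℓ : ℝ)|) ^ s := by
  have hnat : Summable fun n : ℕ ↦ (1 + (n : ℝ)) ^ s := by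
    simpa [add_comm] using (summable_nat_add_iff 1).2 (Real.summable_nat_rpow.2 hs)
  exact .of_nat_of_neg (by simpa using hnat) (by simpa using hnat)

section Schwartz

variable {V : Type*} [NormedAddCommGroup V] [NormedSpace ℝ V]
  {E : Type*} [NormedAddCommGroup E] [NormedSpace ℝ E]

lemma exists_norm_schwartz_add_le (f : 𝓢(V, E)) (q R : ℝ) :
    ∃ C, 0 ≤ C ∧ ∀ x y, ‖y‖ ≤ R → ‖f (x + y)‖ ≤ C * (1 + ‖x‖) ^ (-q) := by
  obtain ⟨k, hqk⟩ := exists_nat_ge q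
  obtain ⟨D, hD⟩ : ∃ D : ℝ, ∀ z : V, (1 + ‖z‖) ^ k * ‖f z‖ ≤ D :=
    ⟨_, fun z ↦ by
      simpa only [norm_iteratedFDeriv_zero] using
        SchwartzMap.one_add_le_sup_seminorm_apply (𝕜 := ℝ) (m := (k, 0)) le_rfl le_rfl f z⟩
  have hD_nonneg : 0 ≤ D := le_trans (by positivity) (hD 0)
  refine ⟨(1 + |R|) ^ k * D, by positivity, fun x y hy ↦ ?_⟩
  have peetre : 1 + ‖x‖ ≤ (1 + |R|) * (1 + ‖x + y‖) := by
    have hx : ‖x‖ ≤ ‖x + y‖ + ‖y‖ := by simpa using norm_sub_le (x + y) y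
    nlinarith [le_abs_self R, norm_nonneg (x + y), abs_nonneg R]
  have hpow : (1 + ‖x‖) ^ k * ‖f (x + y)‖ ≤ (1 + |R|) ^ k * D := by
    calc
      (1 + ‖x‖) ^ k * ‖f (x + y)‖ ≤ ((1 + |R|) * (1 + ‖x + y‖)) ^ k * ‖f (x + y)‖ := by gcongr
      _ = (1 + |R|) ^ k * ((1 + ‖x + y‖) ^ k * ‖f (x + y)‖) := by rw [mul_pow, mul_assoc]
      _ ≤ (1 + |R|) ^ k * D := by gcongr; exact hD _
  calc
    ‖f (x + y)‖ ≤ (1 + |R|) ^ k * D * (1 + ‖x‖) ^ (-(k : ℝ)) := by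
      rw [rpow_neg (by positivity), rpow_natCast, ← div_eq_mul_inv, le_div_iff₀' (by positivity)]
      exact hpow
    _ ≤ (1 + |R|) ^ k * D * (1 + ‖x‖) ^ (-q) := by
      gcongr
      linarith [norm_nonneg x]

lemma exists_schwartz_eqOn_closedBall [HasContDiffBump V] [FiniteDimensional ℝ V] {h : V → E}
    (hh : ContDiff ℝ ∞ h) (R : ℝ) : ∃ M : 𝓢(V, E), EqOn M h (closedBall 0 R) := by
  let χ : ContDiffBump (0 : V) := ⟨|R| + 1, |R| + 2, by positivity, by linarith⟩
  have hsmooth : ContDiff ℝ ∞ fun x ↦ χ x • h x := χ.contDiff.smul hh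
  have hsupp : HasCompactSupport fun x ↦ χ x • h x := χ.hasCompactSupport.smul_right
  refine ⟨hsupp.toSchwartzMap hsmooth, fun x hx ↦ ?_⟩
  have hχ : χ x = 1 :=
    χ.one_of_mem_closedBall (closedBall_subset_closedBall (by grind) hx)
  simp [hχ]

end Schwartz

section RealLine

variable {E : Type*} [NormedAddCommGroup E] [NormedSpace ℂ E]

lemma summable_rpow_mul_intervalIntegral_norm_sq (f : 𝓢(ℝ, E)) (q a b : ℝ) :
    Summable fun ℓ : ℤ ↦
      (1 + |(ℓ : ℝ)|) ^ (-q) * ∫ t in (a + ℓ)..(b + (ℓ + 1)), ‖f t‖ ^ 2 := by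
  obtain ⟨C, -, hC⟩ := exists_norm_schwartz_add_le f (1 - q / 2) (max |a| |b + 1|)
  refine .of_norm_bounded
    ((summable_one_add_abs_int_rpow (s := -2) (by norm_num)).mul_left (C ^ 2 * |b + 1 - a|))
    fun ℓ ↦ ?_
  have hnorm : ∀ t ∈ uIoc (a + ℓ) (b + (ℓ + 1)),
      ‖‖f t‖ ^ 2‖ ≤ C ^ 2 * (1 + |(ℓ : ℝ)|) ^ (q - 2) := by
    intro t ht
    have hshift : ‖t - ℓ‖ ≤ max |a| |b + 1| := by
      rw [← norm_eq_abs, norm_eq_abs]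
      rcases mem_uIoc.1 ht with ⟨h₁, h₂⟩ | ⟨h₁, h₂⟩
      · exact abs_le_max_abs_abs (by linarith) (by linarith)
      · rw [max_comm]
        exact abs_le_max_abs_abs (by linarith) (by linarith)
    calc
      ‖‖f t‖ ^ 2‖ = ‖f (ℓ + (t - ℓ))‖ ^ 2 := by simp
      _ ≤ (C * (1 + |(ℓ : ℝ)|) ^ (-(1 - q / 2))) ^ 2 := by gcongr; exact hC _ _ hshift
      _ = C ^ 2 * (1 + |(ℓ : ℝ)|) ^ (q - 2) := by
        rw [mul_pow, ← rpow_mul_natCast (by positivity)]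
        congr 2
        push_cast
        ring
  calc
    ‖(1 + |(ℓ : ℝ)|) ^ (-q) * ∫ t in (a + ℓ)..(b + (ℓ + 1)), ‖f t‖ ^ 2‖
        = (1 + |(ℓ : ℝ)|) ^ (-q) * ‖∫ t in (a + ℓ)..(b + (ℓ + 1)), ‖f t‖ ^ 2‖ := by
      rw [norm_mul, norm_of_nonneg (by positivity)]
    _ ≤ (1 + |(ℓ : ℝ)|) ^ (-q) *
        (C ^ 2 * (1 + |(ℓ : ℝ)|) ^ (q - 2) * |b + (ℓ + 1) - (a + ℓ)|) := by
      gcongr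
      exact intervalIntegral.norm_integral_le_of_norm_le_const hnorm
    _ = C ^ 2 * |b + 1 - a| * ((1 + |(ℓ : ℝ)|) ^ (-q) * (1 + |(ℓ : ℝ)|) ^ (q - 2)) := by
      rw [show b + ((ℓ : ℝ) + 1) - (a + ℓ) = b + 1 - a by ring]
      ring
    _ = C ^ 2 * |b + 1 - a| * (1 + |(ℓ : ℝ)|) ^ (-2 : ℝ) := by
      rw [← rpow_add (by positivity)]
      ring_nf

/-- The dilation `x ↦ f (x / lam)` within Schwartz space, used to reduce to `lam = 1`. -/
noncomputable def schwartzDilation {lam : ℝ} (hlam : lam ≠ 0) (f : 𝓢(ℝ, E)) : 𝓢(ℝ, E) :=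
  SchwartzMap.compCLMOfContinuousLinearEquiv ℂ
    (ContinuousLinearEquiv.unitsEquivAut ℝ (Units.mk0 lam hlam)⁻¹) f

section Dilation

variable {lam : ℝ} (hlam : lam ≠ 0) (f : 𝓢(ℝ, E))

lemma schwartzDilation_apply (x : ℝ) : schwartzDilation hlam f x = f (x / lam) := by
  simp [schwartzDilation, div_eq_mul_inv]

lemma deriv_schwartzDilation (x : ℝ) :
    deriv (schwartzDilation hlam f) x = lam⁻¹ • deriv f (x / lam) := by
  rw [funext (schwartzDilation_apply hlam f)]
  simpa only [div_eq_inv_mul] using deriv_comp_mul_left lam⁻¹ f x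

lemma fourier_schwartzDilation (ξ : ℝ) :
    𝓕 (schwartzDilation hlam f : ℝ → E) ξ = |lam| • 𝓕 (f : ℝ → E) (lam * ξ) := by
  simp only [Real.fourier_real_eq, schwartzDilation_apply]
  rw [← Measure.integral_comp_div]
  refine integral_congr_ae (.of_forall fun v ↦ ?_)
  dsimp only
  rw [show v / lam * (lam * ξ) = v * ξ by field_simp]

lemma support_fourier_schwartzDilation_subset {R : ℝ}
    (hf : Function.support (𝓕 (f : ℝ → E)) ⊆ closedBall 0 (R * |lam|)) :
    Function.support (𝓕 (schwartzDilation hlam f : ℝ → E)) ⊆ closedBall 0 R := by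
  intro ξ hξ
  have hmem : lam * ξ ∈ closedBall 0 (R * |lam|) :=
    hf fun h ↦ hξ (by rw [fourier_schwartzDilation, h, smul_zero])
  rw [mem_closedBall_zero_iff, norm_mul, mul_comm, norm_eq_abs lam] at hmem
  exact mem_closedBall_zero_iff.2 (le_of_mul_le_mul_right hmem (abs_pos.2 hlam))

lemma intervalIntegral_norm_schwartzDilation_sq (a b : ℝ) :
    ∫ t in a..b, ‖schwartzDilation hlam f t‖ ^ 2 =
      lam * ∫ t in (a / lam)..(b / lam), ‖f t‖ ^ 2 := by
  simp only [schwartzDilation_apply]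
  exact intervalIntegral.integral_comp_div (fun t ↦ ‖f t‖ ^ 2) hlam

lemma intervalIntegral_norm_deriv_schwartzDilation_sq (a b : ℝ) :
    ∫ t in a..b, ‖deriv (schwartzDilation hlam f) t‖ ^ 2 =
      lam⁻¹ * ∫ t in (a / lam)..(b / lam), ‖deriv f t‖ ^ 2 := by
  simp only [deriv_schwartzDilation, norm_smul, mul_pow, norm_eq_abs, sq_abs]
  rw [intervalIntegral.integral_const_mul,
    intervalIntegral.integral_comp_div (fun t ↦ ‖deriv f t‖ ^ 2) hlam, smul_eq_mul]
  field_simp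

end Dilation

lemma fourier_derivCLM_apply (f : 𝓢(ℝ, E)) (ξ : ℝ) :
    𝓕 (SchwartzMap.derivCLM ℂ E f) ξ = (2 * π * Complex.I * ξ) • 𝓕 f ξ :=
  congrFun (Real.fourier_deriv f.integrable f.differentiable
    (SchwartzMap.derivCLM ℂ E f).integrable) ξ

lemma intervalIntegral_norm_deriv_sq_le {K : 𝓢(ℝ, ℂ)} {f : 𝓢(ℝ, E)}
    (hK : ∀ t, deriv f t = ∫ v, K v • f (t + v)) {a b : ℝ} (hab : a ≤ b) :
    ∫ t in a..b, ‖deriv f t‖ ^ 2 ≤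
      (∫ v, ‖K v‖) * ∫ v, ‖K v‖ * ∫ t in (a + v)..(b + v), ‖f t‖ ^ 2 := by
  have hf_sq : Integrable fun t ↦ ‖f t‖ ^ 2 := (f.memLp 2).integrable_norm_pow two_ne_zero
  have hmean : Integrable fun t ↦ ∫ v, ‖K v‖ * ‖f (t + v)‖ ^ 2 :=
    (integrable_prod_mul_comp_add K.integrable.norm hf_sq).integral_prod_left
  have hpointwise (t : ℝ) :
      ‖deriv f t‖ ^ 2 ≤ (∫ v, ‖K v‖) * ∫ v, ‖K v‖ * ‖f (t + v)‖ ^ 2 := by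
    rw [hK]
    refine norm_integral_smul_sq_le K.integrable ?_
    obtain ⟨D, -, hD⟩ := f.decay 0 0
    have hf_bound (x : ℝ) : ‖f x‖ ≤ D := by simpa using hD x
    exact K.integrable.norm.mul_bdd (c := D ^ 2) (by fun_prop) (.of_forall fun v ↦ by
      simpa using pow_le_pow_left₀ (norm_nonneg _) (hf_bound (t + v)) 2)
  have hderiv : Continuous (deriv f) := (f.smooth 1).continuous_deriv le_rfl
  calc
    ∫ t in a..b, ‖deriv f t‖ ^ 2
        ≤ ∫ t in a..b, (∫ v, ‖K v‖) * ∫ v, ‖K v‖ * ‖f (t + v)‖ ^ 2 :=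
      intervalIntegral.integral_mono_on hab
        (Continuous.intervalIntegrable (by fun_prop) _ _)
        (hmean.const_mul _).intervalIntegrable fun t _ ↦ hpointwise t
    _ = _ := by
      rw [intervalIntegral.integral_const_mul,
        intervalIntegral_integral_mul_comp_add K.integrable.norm hf_sq]

lemma integral_norm_mul_intervalIntegral_norm_sq_le_tsum {K : 𝓢(ℝ, ℂ)} {q C : ℝ}
    (hK : ∀ x y, ‖y‖ ≤ 1 → ‖K (x + y)‖ ≤ C * (1 + ‖x‖) ^ (-q)) (f : 𝓢(ℝ, E)) {a b : ℝ}
    (hab : a ≤ b) :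
    ∫ v, ‖K v‖ * ∫ t in (a + v)..(b + v), ‖f t‖ ^ 2 ≤
      C * ∑' ℓ : ℤ, (1 + |(ℓ : ℝ)|) ^ (-q) *
        ∫ t in (a + ℓ)..(b + (ℓ + 1)), ‖f t‖ ^ 2 := by
  have hf_sq : Integrable fun t ↦ ‖f t‖ ^ 2 := (f.memLp 2).integrable_norm_pow two_ne_zero
  rw [← tsum_mul_left]
  refine integral_le_tsum_of_forall_mem_Icc_le
    (integrable_mul_intervalIntegral_comp_add K.integrable.norm hf_sq a b)
    ((summable_rpow_mul_intervalIntegral_norm_sq f q a b).mul_left C) fun ℓ v ⟨hv₁, hv₂⟩ ↦ ?_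
  have hkernel : ‖K v‖ ≤ C * (1 + |(ℓ : ℝ)|) ^ (-q) := by
    have hv : ‖v - ℓ‖ ≤ 1 := by
      rw [norm_eq_abs, abs_le]
      constructor <;> linarith
    simpa only [add_sub_cancel, norm_eq_abs (ℓ : ℝ)] using hK ℓ (v - ℓ) hv
  have hwindow : ∫ t in (a + v)..(b + v), ‖f t‖ ^ 2 ≤
      ∫ t in (a + ℓ)..(b + (ℓ + 1)), ‖f t‖ ^ 2 :=
    intervalIntegral.integral_mono_interval (by linarith) (by linarith) (by linarith)
      (.of_forall fun t ↦ sq_nonneg _) hf_sq.intervalIntegrable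
  calc
    ‖K v‖ * ∫ t in (a + v)..(b + v), ‖f t‖ ^ 2
        ≤ C * (1 + |(ℓ : ℝ)|) ^ (-q) * ∫ t in (a + ℓ)..(b + (ℓ + 1)), ‖f t‖ ^ 2 :=
      mul_le_mul hkernel hwindow
        (intervalIntegral.integral_nonneg (by linarith) fun t _ ↦ sq_nonneg _)
        ((norm_nonneg _).trans hkernel)
    _ = _ := mul_assoc _ _ _

variable [CompleteSpace E]

variable (E) in
lemma exists_schwartz_deriv_eq_integral_smul (R : ℝ) :
    ∃ K : 𝓢(ℝ, ℂ), ∀ f : 𝓢(ℝ, E), Function.support (𝓕 (f : ℝ → E)) ⊆ closedBall 0 R →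
      ∀ t, deriv f t = ∫ v, K v • f (t + v) := by
  have hsymbol : ContDiff ℝ ∞ fun ξ : ℝ ↦ 2 * π * Complex.I * ξ :=
    contDiff_const.mul Complex.ofRealCLM.contDiff
  obtain ⟨M, hM⟩ := exists_schwartz_eqOn_closedBall hsymbol R
  refine ⟨𝓕 M, fun f hf t ↦ ?_⟩
  have hderiv : SchwartzMap.derivCLM ℂ E f =
      SchwartzMap.convolution (ContinuousLinearMap.lsmul ℂ ℂ) (𝓕⁻ M) f := by
    apply (FourierTransform.fourierCLE ℂ 𝓢(ℝ, E)).injective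
    ext ξ
    simp only [FourierTransform.fourierCLE_apply, SchwartzMap.fourier_convolution,
      SchwartzMap.pairing_apply_apply, fourier_derivCLM_apply,
      FourierTransform.fourier_fourierInv_eq, ContinuousLinearMap.lsmul_apply]
    by_cases hξ : 𝓕 f ξ = 0
    · simp only [hξ, smul_zero]
    · rw [hM (hf hξ)]
  calc
    deriv f t = ∫ v, 𝓕⁻ M v • f (t - v) := by
      rw [← SchwartzMap.derivCLM_apply ℂ, hderiv, SchwartzMap.convolution_apply]
      rfl
    _ = ∫ v, 𝓕⁻ M (-v) • f (t - -v) :=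
      (integral_neg_eq_self (fun v ↦ 𝓕⁻ M v • f (t - v)) volume).symm
    _ = ∫ v, 𝓕 M v • f (t + v) := by
      simp [SchwartzMap.fourierInv_apply_eq]

variable (E) in
lemma exists_intervalIntegral_norm_deriv_sq_le_tsum (q R : ℝ) :
    ∃ B, 0 < B ∧ ∀ f : 𝓢(ℝ, E), Function.support (𝓕 (f : ℝ → E)) ⊆ closedBall 0 R →
      ∀ a b, a ≤ b → ∫ t in a..b, ‖deriv f t‖ ^ 2 ≤
        B * ∑' ℓ : ℤ, (1 + |(ℓ : ℝ)|) ^ (-q) *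
          ∫ t in (a + ℓ)..(b + (ℓ + 1)), ‖f t‖ ^ 2 := by
  obtain ⟨K, hK⟩ := exists_schwartz_deriv_eq_integral_smul E R
  obtain ⟨C, hC_nonneg, hC⟩ := exists_norm_schwartz_add_le K q 1
  refine ⟨(∫ v, ‖K v‖) * C + 1, by positivity, fun f hf a b hab ↦ ?_⟩
  calc
    ∫ t in a..b, ‖deriv f t‖ ^ 2
        ≤ (∫ v, ‖K v‖) * ∫ v, ‖K v‖ * ∫ t in (a + v)..(b + v), ‖f t‖ ^ 2 :=
      intervalIntegral_norm_deriv_sq_le (hK f hf) hab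
    _ ≤ (∫ v, ‖K v‖) * (C * ∑' ℓ : ℤ, (1 + |(ℓ : ℝ)|) ^ (-q) *
          ∫ t in (a + ℓ)..(b + (ℓ + 1)), ‖f t‖ ^ 2) := by
      gcongr
      exact integral_norm_mul_intervalIntegral_norm_sq_le_tsum hC f hab
    _ ≤ _ := by
      rw [← mul_assoc]
      gcongr
      · refine tsum_nonneg fun ℓ ↦ mul_nonneg (by positivity) ?_
        exact intervalIntegral.integral_nonneg (by linarith) fun t _ ↦ sq_nonneg _
      · linarith

end RealLine

theorem derivative_L2_bound_of_band_limited_general (E : Type*) [NormedAddCommGroup E]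
    [NormedSpace ℂ E] [CompleteSpace E] (q c : ℝ) :
    ∃ B : ℝ, 0 < B ∧ ∀ lam : ℝ, 0 < lam → ∀ f : 𝓢(ℝ, E),
      Function.support (𝓕 (f : ℝ → E)) ⊆ closedBall 0 (c * lam) →
      ∀ τ' τ'' : ℝ, τ' ≤ τ'' →
        (∫ t in τ'..τ'', ‖deriv f t‖ ^ 2) ≤
          B * lam ^ 2 * ∑' ℓ : ℤ,
            (1 + |(ℓ : ℝ)|) ^ (-q) *
              ∫ t in (τ' + (ℓ : ℝ) / lam)..(τ'' + ((ℓ : ℝ) + 1) / lam), ‖f t‖ ^ 2 := by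
  obtain ⟨B, hB_pos, hB⟩ := exists_intervalIntegral_norm_deriv_sq_le_tsum E q c
  refine ⟨B, hB_pos, fun lam hlam f hf τ' τ'' hτ ↦ ?_⟩
  have hband : Function.support (𝓕 (schwartzDilation hlam.ne' f : ℝ → E)) ⊆ closedBall 0 c :=
    support_fourier_schwartzDilation_subset _ f (by rwa [abs_of_pos hlam])
  have hunit := hB _ hband (lam * τ') (lam * τ'') (by gcongr)
  simp only [intervalIntegral_norm_schwartzDilation_sq,
    intervalIntegral_norm_deriv_schwartzDilation_sq, add_div, mul_div_cancel_left₀ _ hlam.ne',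
    mul_left_comm _ lam, tsum_mul_left] at hunit
  simp only [add_div]
  rw [inv_mul_le_iff₀ hlam] at hunit
  exact hunit.trans_eq (by ring)

lemma fourierTf_two_pi_mul (f : ℝ → ℂ) (ξ : ℝ) :
    fourierTf f (2 * π * ξ) = ((2 * π)⁻¹ : ℝ) * 𝓕 f ξ := by
  rw [fourierTf, Real.fourier_real_eq_integral_exp_smul]
  congr 2 with t
  rw [smul_eq_mul, mul_comm]
  congr 2
  push_cast
  ring

lemma support_fourier_subset_of_support_fourierTf_subset {f : ℝ → ℂ} {r : ℝ}
    (hf : Function.support (fourierTf f) ⊆ Icc (-(2 * r)) (2 * r)) :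
    Function.support (𝓕 f) ⊆ closedBall 0 (π⁻¹ * r) := by
  intro ξ hξ
  have hmem : |2 * π * ξ| ≤ 2 * r := abs_le.2 <| hf <| by
    rw [Function.mem_support, fourierTf_two_pi_mul]
    exact mul_ne_zero (by exact_mod_cast (by positivity : (2 * π)⁻¹ ≠ 0)) hξ
  rw [abs_mul, abs_of_pos two_pi_pos] at hmem
  rw [mem_closedBall_zero_iff, norm_eq_abs, le_inv_mul_iff₀ pi_pos]
  linarith

/-- For every `q > 1` there is `B > 0` (depending only on `q`) such that: for every `λ > 0`
and every Schwartz function `f` with `f̂` supported in `[-2λ, 2λ]`, and all `τ' ≤ τ''`,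
`∫_{τ'}^{τ''} |f'(t)|² dt ≤ B λ² Σ_{ℓ ∈ ℤ} (1+|ℓ|)^{-q} ∫_{τ'+ℓ/λ}^{τ''+(ℓ+1)/λ} |f(t)|² dt`. -/
theorem derivative_L2_bound_of_band_limited (q : ℝ) (hq : 1 < q) :
    ∃ B : ℝ, 0 < B ∧ ∀ lam : ℝ, 0 < lam → ∀ f : SchwartzMap ℝ ℂ,
      Function.support (fourierTf f) ⊆ Set.Icc (-(2 * lam)) (2 * lam) →
      ∀ τ' τ'' : ℝ, τ' ≤ τ'' →
        (∫ t in τ'..τ'', ‖deriv (⇑f) t‖ ^ 2) ≤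
          B * lam ^ 2 * ∑' ℓ : ℤ,
            (1 + |(ℓ : ℝ)|) ^ (-q) *
              ∫ t in (τ' + (ℓ : ℝ) / lam)..(τ'' + ((ℓ : ℝ) + 1) / lam), ‖f t‖ ^ 2 := by
  obtain ⟨B, hB_pos, hB⟩ := derivative_L2_bound_of_band_limited_general ℂ q π⁻¹
  exact ⟨B, hB_pos, fun lam hlam f hf ↦
    hB lam hlam f (support_fourier_subset_of_support_fourierTf_subset hf)⟩
end

section
/- There exists a constant B > 0, depending only on ζ, such that if ω₀ ≤ 1 then for every admissible Ψ as in the context and every τ̄ ∈ ℝ, ∫_X ∫₀^{2π} ∫_{τ̄−1}^{τ̄} (∂_φ Ψ_♭)²(t,φ,x) dt dφ dμ(x) ≤ B ω₀^{-1} · sup_{τ̃ ∈ ℝ} ∫_X ∫₀^{2π} ∫_{τ̃−1}^{τ̃} (∂_φ Ψ)²(t,φ,x) dt dφ dμ(x). -/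
open MeasureTheory Real ENNReal

/-- The low-pass kernel `K_λ(t) = (2π)⁻¹ λ ∫ ζ(ω) e^{iλωt} dω`. -/
noncomputable def lowPassKernel (ζ : ℝ → ℝ) (lam t : ℝ) : ℂ :=
  ((2 * Real.pi)⁻¹ * lam : ℝ) * ∫ ω : ℝ, (ζ ω : ℂ) * Complex.exp (Complex.I * (lam * ω * t))

/-- The low-pass filtering `K_λ ∗ f` of `f` at scale `λ`. -/
noncomputable def lowPassFilter (ζ : ℝ → ℝ) (lam : ℝ) (f : ℝ → ℂ) (t : ℝ) : ℂ :=
  ∫ s : ℝ, lowPassKernel ζ lam (t - s) * f s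

/-- The `k`-th azimuthal Fourier mode `Ψ_k(t,x) = (2π)⁻¹ ∫₀^{2π} Ψ(t,φ,x) e^{ikφ} dφ`. -/
noncomputable def azMode {X : Type} (Ψ : ℝ → ℝ → X → ℝ) (k : ℤ) (t : ℝ) (x : X) : ℂ :=
  ((2 * Real.pi)⁻¹ : ℝ) *
    ∫ φ in (0 : ℝ)..(2 * Real.pi), (Ψ t φ x : ℂ) * Complex.exp (Complex.I * ((k : ℝ) * φ))

/-- The low-frequency part
`Ψ_♭(t,φ,x) = Σ_{k ≠ 0} e^{-ikφ} (K_{ω₀|k|} ∗ Ψ_k(·,x))(t)`. -/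
noncomputable def lowPart {X : Type} (ζ : ℝ → ℝ) (ω₀ : ℝ) (Ψ : ℝ → ℝ → X → ℝ)
    (t φ : ℝ) (x : X) : ℂ :=
  ∑' k : {k : ℤ // k ≠ 0},
    Complex.exp (-(Complex.I * ((k.1 : ℝ) * φ))) *
      lowPassFilter ζ (ω₀ * |(k.1 : ℝ)|) (fun s => azMode Ψ k.1 s x) t

/-- The high-frequency part `Ψ_♯ = Ψ − Ψ_♭`. -/
noncomputable def highPart {X : Type} (ζ : ℝ → ℝ) (ω₀ : ℝ) (Ψ : ℝ → ℝ → X → ℝ)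
    (t φ : ℝ) (x : X) : ℂ :=
  (Ψ t φ x : ℂ) - lowPart ζ ω₀ Ψ t φ x

/-!
The kernel `K_λ` is dominated, up to a constant depending only on `ζ`, by the Cauchy profile
`λ / (1 + (λu)²)`: its mass is bounded uniformly in `λ`, and for `λ ≥ a` it is at most `1 / (a u²)`
away from the origin. By Cauchy-Schwarz against `|K_λ|`, the `L²` mass of `K_λ ∗ g` in the window
`[τ - 1, τ]` is at most a sum over the shifted windows `[τ + n - 1, τ + n]` of the `L²` masses of
`g`, with weights of order `a⁻¹ (1 + n²)⁻¹`. Each mode `k ≠ 0` of `∂_φ Ψ` is filtered at the scale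
`ω₀|k| ≥ min(ω₀, 1)`, so the weights do not depend on `k`; Parseval in `φ` sums the modes, and the
weights sum over `n` to a multiple of `1 / min(ω₀, 1)`.
-/

lemma enorm_integral_mul_sq_le {α 𝕜 : Type*} [MeasurableSpace α] {μ : Measure α} [RCLike 𝕜]
    {K g : α → 𝕜} (hK : AEMeasurable K μ) (hg : AEMeasurable g μ) :
    ‖∫ s, K s * g s ∂μ‖ₑ ^ 2 ≤ (∫⁻ s, ‖K s‖ₑ ∂μ) * ∫⁻ s, ‖K s‖ₑ * ‖g s‖ₑ ^ 2 ∂μ := by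
  have split (s : α) : ‖K s * g s‖ₑ =
      ‖K s‖ₑ ^ (1 / 2 : ℝ) * (‖K s‖ₑ * ‖g s‖ₑ ^ 2) ^ (1 / 2 : ℝ) := by
    rw [ENNReal.mul_rpow_of_nonneg _ _ (by norm_num), ← mul_assoc,
      ← ENNReal.rpow_add_of_nonneg _ _ (by norm_num) (by norm_num), ← ENNReal.rpow_natCast_mul,
      enorm_mul]
    norm_num
  have holder := ENNReal.lintegral_mul_norm_pow_le (p := 1 / 2) (q := 1 / 2) hK.enorm
    (hK.enorm.mul (hg.enorm.pow_const 2)) (by norm_num) (by norm_num) (by norm_num)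
  simp_rw [Pi.mul_apply, ← split] at holder
  rw [← ENNReal.mul_rpow_of_nonneg _ _ (by norm_num)] at holder
  calc ‖∫ s, K s * g s ∂μ‖ₑ ^ 2
      ≤ (((∫⁻ s, ‖K s‖ₑ ∂μ) * ∫⁻ s, ‖K s‖ₑ * ‖g s‖ₑ ^ 2 ∂μ) ^ (1 / 2 : ℝ)) ^ 2 := by
        gcongr
        exact (enorm_integral_le_lintegral_enorm _).trans holder
    _ = _ := by
        rw [← ENNReal.rpow_mul_natCast]
        norm_num

lemma iUnion_Icc_unit_window (τ : ℝ) : ⋃ n : ℤ, Set.Icc (τ + n - 1) (τ + n) = Set.univ := by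
  simpa only [sub_add_eq_add_sub, add_sub_cancel_right] using iUnion_Icc_add_intCast (τ - 1)

lemma setLIntegral_enorm_convolution_sq_le {𝕜 : Type*} [RCLike 𝕜] {K g : ℝ → 𝕜}
    (hK : Measurable K) (hg : Measurable g) {τ : ℝ} {w : ℤ → ℝ≥0∞}
    (hw : ∀ n : ℤ, ∀ s ∈ Set.Icc (τ + n - 1) (τ + n),
      ∫⁻ t in Set.Icc (τ - 1) τ, ‖K (t - s)‖ₑ ≤ w n) :
    ∫⁻ t in Set.Icc (τ - 1) τ, ‖∫ s, K (t - s) * g s‖ₑ ^ 2 ≤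
      (∫⁻ u, ‖K u‖ₑ) * ∑' n : ℤ, w n * ∫⁻ s in Set.Icc (τ + n - 1) (τ + n), ‖g s‖ₑ ^ 2 := by
  have hKg : Measurable fun p : ℝ × ℝ => ‖K (p.1 - p.2)‖ₑ * ‖g p.2‖ₑ ^ 2 := by fun_prop
  have pointwise (t : ℝ) : ‖∫ s, K (t - s) * g s‖ₑ ^ 2 ≤
      (∫⁻ u, ‖K u‖ₑ) * ∫⁻ s, ‖K (t - s)‖ₑ * ‖g s‖ₑ ^ 2 := by
    rw [← lintegral_sub_left_eq_self (fun u => ‖K u‖ₑ) t]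
    exact enorm_integral_mul_sq_le (hK.comp (measurable_const.sub measurable_id)).aemeasurable
      hg.aemeasurable
  calc ∫⁻ t in Set.Icc (τ - 1) τ, ‖∫ s, K (t - s) * g s‖ₑ ^ 2
      ≤ ∫⁻ t in Set.Icc (τ - 1) τ, (∫⁻ u, ‖K u‖ₑ) * ∫⁻ s, ‖K (t - s)‖ₑ * ‖g s‖ₑ ^ 2 :=
        lintegral_mono pointwise
    _ = (∫⁻ u, ‖K u‖ₑ) * ∫⁻ s, (∫⁻ t in Set.Icc (τ - 1) τ, ‖K (t - s)‖ₑ) * ‖g s‖ₑ ^ 2 := by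
        rw [lintegral_const_mul _ hKg.lintegral_prod_right', lintegral_lintegral_swap
          hKg.aemeasurable]
        congr 2 with s
        exact lintegral_mul_const' (‖g s‖ₑ ^ 2) _ (by finiteness)
    _ ≤ (∫⁻ u, ‖K u‖ₑ) * ∑' n : ℤ, ∫⁻ s in Set.Icc (τ + n - 1) (τ + n),
          (∫⁻ t in Set.Icc (τ - 1) τ, ‖K (t - s)‖ₑ) * ‖g s‖ₑ ^ 2 := by
        gcongr
        rw [← setLIntegral_univ, ← iUnion_Icc_unit_window τ]
        exact lintegral_iUnion_le _ _
    _ ≤ _ := by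
        gcongr with n
        rw [← lintegral_const_mul _ (by fun_prop)]
        exact setLIntegral_mono' measurableSet_Icc fun s hs => by gcongr; exact hw n s hs

lemma enorm_convolution_le_of_bound {𝕜 : Type*} [RCLike 𝕜] {K g : ℝ → 𝕜} (hK : Measurable K)
    {m : ℝ≥0∞} (hg : ∀ s, ‖g s‖ₑ ≤ m) (t : ℝ) :
    ‖∫ s, K (t - s) * g s‖ₑ ≤ (∫⁻ u, ‖K u‖ₑ) * m := by
  calc ‖∫ s, K (t - s) * g s‖ₑ
      ≤ ∫⁻ s, ‖K (t - s)‖ₑ * m := (enorm_integral_le_lintegral_enorm _).trans <|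
        lintegral_mono fun s => by rw [enorm_mul]; gcongr; exact hg s
    _ = (∫⁻ u, ‖K u‖ₑ) * m := by
        rw [lintegral_mul_const _ (by fun_prop), lintegral_sub_left_eq_self (fun u => ‖K u‖ₑ) t]

/-- The dilation at scale `lam` of the Cauchy profile `(1 + u²)⁻¹`, normalised to have an integral
that does not depend on `lam`. It serves as majorant of the low-pass kernels. -/
noncomputable def cauchyProfile (lam u : ℝ) : ℝ := lam * (1 + (lam * u) ^ 2)⁻¹

lemma cauchyProfile_nonneg {lam : ℝ} (hlam : 0 ≤ lam) (u : ℝ) : 0 ≤ cauchyProfile lam u := by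
  unfold cauchyProfile
  positivity

lemma lintegral_cauchyProfile {lam : ℝ} (hlam : 0 < lam) :
    ∫⁻ u, ENNReal.ofReal (cauchyProfile lam u) = ENNReal.ofReal π := by
  have hintg : Integrable (cauchyProfile lam) :=
    (integrable_inv_one_add_sq.comp_mul_left' hlam.ne').const_mul lam
  rw [← ofReal_integral_eq_lintegral_ofReal hintg (ae_of_all _ (cauchyProfile_nonneg hlam.le))]
  congr 1
  unfold cauchyProfile
  rw [integral_const_mul, Measure.integral_comp_mul_left (fun u : ℝ => (1 + u ^ 2)⁻¹),
    integral_univ_inv_one_add_sq, abs_of_pos (by positivity), smul_eq_mul,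
    mul_inv_cancel_left₀ hlam.ne']

lemma cauchyProfile_le_inv {a lam u : ℝ} (ha : 0 < a) (hlam : a ≤ lam) (hu : u ≠ 0) :
    cauchyProfile lam u ≤ (a * u ^ 2)⁻¹ := by
  have hlam0 : 0 < lam := ha.trans_le hlam
  calc cauchyProfile lam u ≤ lam * ((lam * u) ^ 2)⁻¹ := by
        unfold cauchyProfile
        gcongr
        linarith
    _ = (lam * u ^ 2)⁻¹ := by field_simp
    _ ≤ (a * u ^ 2)⁻¹ := by gcongr

lemma abs_sub_one_le_abs_sub_of_mem_window {τ s t r : ℝ} (ht : t ∈ Set.Icc (τ - 1) τ)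
    (hs : s ∈ Set.Icc (τ + r - 1) (τ + r)) : |r| - 1 ≤ |t - s| := by
  have hnear : |r + (t - s)| ≤ 1 := abs_le.2 ⟨by linarith [ht.1, hs.2], by linarith [ht.2, hs.1]⟩
  have := abs_sub (r + (t - s)) (t - s)
  rw [add_sub_cancel_right] at this
  linarith

lemma setLIntegral_cauchyProfile_sub_le {a lam τ s : ℝ} {n : ℤ} (ha : 0 < a) (ha1 : a ≤ 1)
    (hlam : a ≤ lam) (hs : s ∈ Set.Icc (τ + n - 1) (τ + n)) :
    ∫⁻ t in Set.Icc (τ - 1) τ, ENNReal.ofReal (cauchyProfile lam (t - s)) ≤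
      ENNReal.ofReal (8 / a * (1 + (n : ℝ) ^ 2)⁻¹) := by
  rcases le_or_gt |n| 1 with hn | hn
  · have hn' : (n : ℝ) ^ 2 ≤ 1 := (sq_le_one_iff_abs_le_one _).2 (by exact_mod_cast hn)
    calc ∫⁻ t in Set.Icc (τ - 1) τ, ENNReal.ofReal (cauchyProfile lam (t - s))
        ≤ ∫⁻ t, ENNReal.ofReal (cauchyProfile lam (t - s)) := setLIntegral_le_lintegral _ _
      _ = ENNReal.ofReal π := by
          rw [lintegral_sub_right_eq_self (fun u => ENNReal.ofReal (cauchyProfile lam u)) s,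
            lintegral_cauchyProfile (ha.trans_le hlam)]
      _ ≤ _ := by
          refine ENNReal.ofReal_le_ofReal (pi_le_four.trans ?_)
          rw [← div_eq_mul_inv, div_div, le_div_iff₀ (by positivity)]
          nlinarith
  · have hn2 : (2 : ℝ) ≤ |(n : ℝ)| := by exact_mod_cast hn
    have far (t : ℝ) (ht : t ∈ Set.Icc (τ - 1) τ) :
        cauchyProfile lam (t - s) ≤ 8 / a * (1 + (n : ℝ) ^ 2)⁻¹ := by
      have hdist : |(n : ℝ)| / 2 ≤ |t - s| := by
        linarith [abs_sub_one_le_abs_sub_of_mem_window ht hs]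
      have hsq : 1 + (n : ℝ) ^ 2 ≤ 8 * (t - s) ^ 2 := by
        rw [← sq_abs (n : ℝ), ← sq_abs (t - s)]
        nlinarith
      have hne : t - s ≠ 0 := abs_pos.1 (by linarith)
      calc cauchyProfile lam (t - s) ≤ (a * (t - s) ^ 2)⁻¹ := cauchyProfile_le_inv ha hlam hne
        _ = 8 / a * (8 * (t - s) ^ 2)⁻¹ := by field_simp
        _ ≤ 8 / a * (1 + (n : ℝ) ^ 2)⁻¹ := by gcongr
    refine (setLIntegral_mono' measurableSet_Icc fun t ht =>
      ENNReal.ofReal_le_ofReal (far t ht)).trans ?_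
    simp

/-- The weight with which the window `[τ + n - 1, τ + n]` of a function contributes to the window
`[τ - 1, τ]` of its convolution with a kernel dominated by `C * cauchyProfile lam`, for a scale
`lam ≥ a`. -/
noncomputable def windowWeight (C a : ℝ) (n : ℤ) : ℝ≥0∞ :=
  ENNReal.ofReal (8 * π * C ^ 2 / a * (1 + (n : ℝ) ^ 2)⁻¹)

lemma summable_inv_one_add_sq_int : Summable fun n : ℤ => (1 + (n : ℝ) ^ 2)⁻¹ := by
  refine (Real.summable_one_div_int_pow.2 one_lt_two).of_norm_bounded_eventually ?_
  filter_upwards [(Set.finite_singleton (0 : ℤ)).compl_mem_cofinite] with n hn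
  have hn0 : (n : ℝ) ≠ 0 := by exact_mod_cast hn
  rw [Real.norm_of_nonneg (by positivity), one_div]
  gcongr
  linarith

lemma tsum_windowWeight (C : ℝ) {a : ℝ} (ha : 0 < a) :
    ∑' n, windowWeight C a n =
      ENNReal.ofReal (8 * π * C ^ 2 * (∑' n : ℤ, (1 + (n : ℝ) ^ 2)⁻¹) / a) := by
  unfold windowWeight
  rw [← ENNReal.ofReal_tsum_of_nonneg (fun n => by positivity)
    (summable_inv_one_add_sq_int.mul_left _), tsum_mul_left, div_mul_eq_mul_div]

section CauchyDominatedKernel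

variable {K g : ℝ → ℂ} {C lam : ℝ}

lemma enorm_le_of_norm_le_cauchyProfile (hC : 0 ≤ C) {u : ℝ}
    (hKC : ‖K u‖ ≤ C * cauchyProfile lam u) :
    ‖K u‖ₑ ≤ ENNReal.ofReal C * ENNReal.ofReal (cauchyProfile lam u) := by
  rw [← ofReal_norm, ← ENNReal.ofReal_mul hC]
  exact ENNReal.ofReal_le_ofReal hKC

lemma lintegral_enorm_le_of_norm_le_cauchyProfile (hC : 0 ≤ C) (hlam : 0 < lam)
    (hKC : ∀ u, ‖K u‖ ≤ C * cauchyProfile lam u) :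
    ∫⁻ u, ‖K u‖ₑ ≤ ENNReal.ofReal (C * π) := by
  refine (lintegral_mono fun u => enorm_le_of_norm_le_cauchyProfile hC (hKC u)).trans_eq ?_
  rw [lintegral_const_mul' _ _ ENNReal.ofReal_ne_top, lintegral_cauchyProfile hlam,
    ← ENNReal.ofReal_mul hC]

lemma setLIntegral_enorm_convolution_sq_le_tsum_windowWeight (hC : 0 ≤ C) {a : ℝ} (ha : 0 < a)
    (ha1 : a ≤ 1) (hlam : a ≤ lam) (hK : Measurable K)
    (hKC : ∀ u, ‖K u‖ ≤ C * cauchyProfile lam u) (hg : Measurable g) (τ : ℝ) :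
    ∫⁻ t in Set.Icc (τ - 1) τ, ‖∫ s, K (t - s) * g s‖ₑ ^ 2 ≤
      ∑' n : ℤ, windowWeight C a n * ∫⁻ s in Set.Icc (τ + n - 1) (τ + n), ‖g s‖ₑ ^ 2 := by
  have hwindow (n : ℤ) (s : ℝ) (hs : s ∈ Set.Icc (τ + n - 1) (τ + n)) :
      ∫⁻ t in Set.Icc (τ - 1) τ, ‖K (t - s)‖ₑ ≤
        ENNReal.ofReal C * ENNReal.ofReal (8 / a * (1 + (n : ℝ) ^ 2)⁻¹) := by
    refine (lintegral_mono fun t => enorm_le_of_norm_le_cauchyProfile hC (hKC (t - s))).trans ?_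
    rw [lintegral_const_mul' _ _ ENNReal.ofReal_ne_top]
    gcongr
    exact setLIntegral_cauchyProfile_sub_le ha ha1 hlam hs
  refine (setLIntegral_enorm_convolution_sq_le hK hg hwindow).trans ?_
  rw [← ENNReal.tsum_mul_left]
  refine ENNReal.tsum_le_tsum fun n => ?_
  rw [← mul_assoc]
  gcongr
  calc (∫⁻ u, ‖K u‖ₑ) * (ENNReal.ofReal C * ENNReal.ofReal (8 / a * (1 + (n : ℝ) ^ 2)⁻¹))
      ≤ ENNReal.ofReal (C * π) *
          (ENNReal.ofReal C * ENNReal.ofReal (8 / a * (1 + (n : ℝ) ^ 2)⁻¹)) := by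
        gcongr
        exact lintegral_enorm_le_of_norm_le_cauchyProfile hC (ha.trans_le hlam) hKC
    _ = windowWeight C a n := by
        rw [windowWeight, ← ENNReal.ofReal_mul hC, ← ENNReal.ofReal_mul (by positivity)]
        congr 1
        ring

end CauchyDominatedKernel

section LowPassKernel

lemma lowPassKernel_eq_fourier (ζ : SchwartzMap ℝ ℝ) (lam t : ℝ) :
    lowPassKernel ζ lam t = ((2 * π)⁻¹ * lam : ℝ) *
      (FourierTransform.fourier (SchwartzMap.postcompCLM Complex.ofRealCLM ζ))
        (-(lam * t) / (2 * π)) := by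
  rw [SchwartzMap.fourier_coe, lowPassKernel, Real.fourier_real_eq_integral_exp_smul]
  congr 2 with ω
  have hphase : ((-2 * π * ω * (-(lam * t) / (2 * π)) : ℝ) : ℂ) * Complex.I =
      Complex.I * (lam * ω * t) := by
    push_cast
    field_simp [Real.pi_ne_zero]
  rw [hphase, smul_eq_mul, mul_comm]
  rfl

lemma exists_norm_lowPassKernel_le (ζ : SchwartzMap ℝ ℝ) :
    ∃ C : ℝ, 0 < C ∧ ∀ lam : ℝ, 0 < lam → ∀ t,
      ‖lowPassKernel ζ lam t‖ ≤ C * cauchyProfile lam t := by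
  set S := FourierTransform.fourier (SchwartzMap.postcompCLM Complex.ofRealCLM ζ)
  obtain ⟨C₀, hC₀, decay_zero⟩ := S.decay 0 0
  obtain ⟨C₂, hC₂, decay_two⟩ := S.decay 2 0
  simp only [norm_iteratedFDeriv_zero, pow_zero, one_mul, Real.norm_eq_abs, sq_abs]
    at decay_zero decay_two
  have hS (y : ℝ) : ‖S (-y / (2 * π))‖ ≤ (C₀ + (2 * π) ^ 2 * C₂) * (1 + y ^ 2)⁻¹ := by
    rw [← div_eq_mul_inv, le_div_iff₀ (by positivity)]
    have hy : (2 * π) ^ 2 * (-y / (2 * π)) ^ 2 = y ^ 2 := by field_simp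
    nlinarith [decay_zero (-y / (2 * π)),
      mul_le_mul_of_nonneg_left (decay_two (-y / (2 * π))) (by positivity : 0 ≤ (2 * π) ^ 2)]
  refine ⟨(2 * π)⁻¹ * (C₀ + (2 * π) ^ 2 * C₂), by positivity, fun lam hlam t => ?_⟩
  rw [lowPassKernel_eq_fourier, norm_mul, Complex.norm_real, Real.norm_of_nonneg (by positivity)]
  calc (2 * π)⁻¹ * lam * ‖S (-(lam * t) / (2 * π))‖
      ≤ (2 * π)⁻¹ * lam * ((C₀ + (2 * π) ^ 2 * C₂) * (1 + (lam * t) ^ 2)⁻¹) := by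
        gcongr
        exact hS (lam * t)
    _ = _ := by
        rw [cauchyProfile]
        ring

lemma measurable_lowPassKernel (ζ : SchwartzMap ℝ ℝ) (lam : ℝ) :
    Measurable (lowPassKernel ζ lam) := by
  simp_rw [funext (lowPassKernel_eq_fourier ζ lam)]
  exact ((SchwartzMap.continuous _).measurable.comp (by fun_prop)).const_mul _

lemma lowPassFilter_zero (ζ : ℝ → ℝ) (g : ℝ → ℂ) (t : ℝ) : lowPassFilter ζ 0 g t = 0 := by
  simp [lowPassFilter, lowPassKernel]

lemma lowPassFilter_const_mul (ζ : ℝ → ℝ) (lam : ℝ) (c : ℂ) (g : ℝ → ℂ) (t : ℝ) :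
    lowPassFilter ζ lam (fun s => c * g s) t = c * lowPassFilter ζ lam g t := by
  simp only [lowPassFilter, mul_left_comm _ c, integral_const_mul]

lemma measurable_lowPassFilter (ζ : SchwartzMap ℝ ℝ) (lam : ℝ) {g : ℝ → ℂ} (hg : Measurable g) :
    Measurable (lowPassFilter ζ lam g) := by
  have hK := measurable_lowPassKernel ζ lam
  have hKg : Measurable fun p : ℝ × ℝ => lowPassKernel ζ lam (p.1 - p.2) * g p.2 := by fun_prop
  exact (hKg.stronglyMeasurable.integral_prod_right (ν := volume)).measurable

end LowPassKernel

section AngularFourierModes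

/-- The angular derivative `∂_φ Ψ`. -/
noncomputable def angularDeriv {X : Type} (Ψ : ℝ → ℝ → X → ℝ) (t φ : ℝ) (x : X) : ℝ :=
  deriv (fun φ' => Ψ t φ' x) φ

variable {X : Type} {Ψ : ℝ → ℝ → X → ℝ} {t : ℝ} {x : X}

lemma azMode_eq_fourierCoeffOn (Ψ : ℝ → ℝ → X → ℝ) (k : ℤ) (t : ℝ) (x : X) :
    azMode Ψ k t x = fourierCoeffOn two_pi_pos (fun φ => (Ψ t φ x : ℂ)) (-k) := by
  rw [fourierCoeffOn_eq_integral, azMode, sub_zero, one_div, Complex.real_smul]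
  congr 1
  refine intervalIntegral.integral_congr fun φ _ => ?_
  simp only [neg_neg, fourier_coe_apply, smul_eq_mul]
  rw [mul_comm]
  congr 2
  push_cast
  field_simp [Real.pi_ne_zero]

lemma norm_exp_I_mul_int_mul (k : ℤ) (φ : ℝ) : ‖Complex.exp (Complex.I * ((k : ℝ) * φ))‖ = 1 := by
  rw [mul_comm, ← Complex.ofReal_mul, Complex.norm_exp_ofReal_mul_I]

lemma norm_exp_neg_I_mul_int_mul (k : ℤ) (φ : ℝ) :
    ‖Complex.exp (-(Complex.I * ((k : ℝ) * φ)))‖ = 1 := by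
  rw [Complex.exp_neg, norm_inv, norm_exp_I_mul_int_mul, inv_one]

lemma norm_azMode_le {M : ℝ} (hM : ∀ φ, |Ψ t φ x| ≤ M) (k : ℤ) : ‖azMode Ψ k t x‖ ≤ M := by
  have hintg : ‖∫ φ in (0 : ℝ)..(2 * π), (Ψ t φ x : ℂ) * Complex.exp (Complex.I * ((k : ℝ) * φ))‖ ≤
      M * |2 * π - 0| := by
    refine intervalIntegral.norm_integral_le_of_norm_le_const fun φ _ => ?_
    rw [norm_mul, norm_exp_I_mul_int_mul, mul_one, Complex.norm_real]
    exact hM φ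
  rw [sub_zero, abs_of_pos two_pi_pos] at hintg
  rw [azMode, norm_mul, Complex.norm_real, Real.norm_of_nonneg (by positivity),
    inv_mul_le_iff₀ two_pi_pos, mul_comm (2 * π)]
  exact hintg

lemma fourierCoeffOn_deriv {a b : ℝ} (hab : a < b) {f f' : ℝ → ℂ} (hf : ∀ y, HasDerivAt f (f' y) y)
    (hf' : Continuous f') (hper : f b = f a) (n : ℤ) :
    fourierCoeffOn hab f' n =
      2 * π * Complex.I * n / (b - a) * fourierCoeffOn hab f n := by
  have hba : (b - a : ℂ) ≠ 0 := by exact_mod_cast (sub_pos.2 hab).ne'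
  rcases eq_or_ne n 0 with rfl | hn
  · have hintg : ∫ y in a..b, f' y = 0 := by
      rw [intervalIntegral.integral_eq_sub_of_hasDerivAt (fun y _ => hf y)
        (hf'.intervalIntegrable a b), hper, sub_self]
    simp [fourierCoeffOn_eq_integral, hintg]
  · have hn' : (n : ℂ) ≠ 0 := by exact_mod_cast hn
    rw [fourierCoeffOn_of_hasDerivAt hab hn (fun y _ => hf y) (hf'.intervalIntegrable a b), hper,
      sub_self, mul_zero]
    field_simp [Real.pi_ne_zero]
    ring

lemma azMode_angularDeriv (hΨ : ContDiff ℝ 1 fun φ => Ψ t φ x)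
    (hper : Function.Periodic (fun φ => Ψ t φ x) (2 * π)) (k : ℤ) :
    azMode (angularDeriv Ψ) k t x = -(Complex.I * (k : ℝ)) * azMode Ψ k t x := by
  have hderiv (φ : ℝ) :
      HasDerivAt (fun φ => (Ψ t φ x : ℂ)) (angularDeriv Ψ t φ x : ℂ) φ :=
    (hΨ.differentiable one_ne_zero φ).hasDerivAt.ofReal_comp
  have hcont : Continuous fun φ => (angularDeriv Ψ t φ x : ℂ) :=
    Complex.continuous_ofReal.comp (hΨ.continuous_deriv le_rfl)
  rw [azMode_eq_fourierCoeffOn, azMode_eq_fourierCoeffOn,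
    fourierCoeffOn_deriv two_pi_pos hderiv hcont (by simpa using hper 0)]
  congr 1
  push_cast
  field_simp [Real.pi_ne_zero]
  ring

lemma azMode_angularDeriv_iterate {n : ℕ} (hΨ : ContDiff ℝ n fun φ => Ψ t φ x)
    (hper : Function.Periodic (fun φ => Ψ t φ x) (2 * π)) (k : ℤ) :
    azMode (angularDeriv^[n] Ψ) k t x = (-(Complex.I * (k : ℝ))) ^ n * azMode Ψ k t x := by
  induction n generalizing Ψ with
  | zero => simp
  | succ n ih =>
    have hderiv : ContDiff ℝ n fun φ => angularDeriv Ψ t φ x := hΨ.deriv'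
    have hderiv_per : Function.Periodic (fun φ => angularDeriv Ψ t φ x) (2 * π) := fun φ => by
      simp only [angularDeriv, ← deriv_comp_add_const, hper _]
    rw [Function.iterate_succ_apply, ih hderiv hderiv_per,
      azMode_angularDeriv (hΨ.of_le (by norm_cast; lia)) hper, pow_succ, mul_assoc]

lemma measurable_angularDeriv [MeasurableSpace X]
    (hΨ : Measurable fun p : ℝ × ℝ × X => Ψ p.1 p.2.1 p.2.2)
    (hdiff : ∀ t x, Differentiable ℝ fun φ => Ψ t φ x) :
    Measurable fun p : ℝ × ℝ × X => angularDeriv Ψ p.1 p.2.1 p.2.2 := by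
  refine measurable_of_tendsto_metrizable (f := fun (n : ℕ) (p : ℝ × ℝ × X) =>
    (1 / ((n : ℝ) + 1))⁻¹ • (Ψ p.1 (p.2.1 + 1 / ((n : ℝ) + 1)) p.2.2 - Ψ p.1 p.2.1 p.2.2))
    (fun n => ?_) (tendsto_pi_nhds.2 fun p => ?_)
  · have hshift : Measurable fun p : ℝ × ℝ × X =>
        Ψ p.1 (p.2.1 + 1 / ((n : ℝ) + 1)) p.2.2 :=
      hΨ.comp (by fun_prop : Measurable fun p : ℝ × ℝ × X =>
        (p.1, p.2.1 + 1 / ((n : ℝ) + 1), p.2.2))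
    exact (hshift.sub hΨ).const_smul (1 / ((n : ℝ) + 1))⁻¹
  · have hslope := hasDerivAt_iff_tendsto_slope_zero.1 (hdiff p.1 p.2.2 p.2.1).hasDerivAt
    exact hslope.comp (tendsto_nhdsWithin_iff.2 ⟨tendsto_one_div_add_atTop_nhds_zero_nat,
      Filter.Eventually.of_forall fun n => Nat.one_div_pos_of_nat.ne'⟩)

lemma measurable_azMode (hΨ : Measurable fun p : ℝ × ℝ => Ψ p.1 p.2 x) (k : ℤ) :
    Measurable fun t => azMode Ψ k t x := by
  have hintg : Measurable fun p : ℝ × ℝ =>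
      (Ψ p.1 p.2 x : ℂ) * Complex.exp (Complex.I * ((k : ℝ) * p.2)) := by fun_prop
  simp only [azMode, intervalIntegral.integral_of_le two_pi_pos.le]
  exact (hintg.stronglyMeasurable.integral_prod_right
    (ν := volume.restrict (Set.Ioc 0 (2 * π)))).measurable.const_mul _

end AngularFourierModes

section Parseval

lemma lintegral_enorm_sq_eq_tsum_fourierCoeffOn {a b : ℝ} (hab : a < b) {f : ℝ → ℂ}
    (hf : MemLp f 2 (volume.restrict (Set.Icc a b))) :
    ∫⁻ y in Set.Icc a b, ‖f y‖ₑ ^ 2 =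
      ENNReal.ofReal (b - a) * ∑' k : ℤ, ‖fourierCoeffOn hab f k‖ₑ ^ 2 := by
  have hsum := hasSum_sq_fourierCoeffOn hab
    (hf.mono_measure (Measure.restrict_mono Set.Ioc_subset_Icc_self le_rfl))
  have hcoeff : ∑' k : ℤ, ‖fourierCoeffOn hab f k‖ₑ ^ 2 =
      ENNReal.ofReal ((b - a)⁻¹ • ∫ y in a..b, ‖f y‖ ^ 2) := by
    rw [← hsum.tsum_eq, ENNReal.ofReal_tsum_of_nonneg (fun _ => by positivity) hsum.summable]
    simp only [ENNReal.ofReal_pow, norm_nonneg, ofReal_norm]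
  rw [hcoeff, ← ENNReal.ofReal_mul (sub_pos.2 hab).le, smul_eq_mul,
    mul_inv_cancel_left₀ (sub_pos.2 hab).ne', intervalIntegral.integral_of_le hab.le,
    ← integral_Icc_eq_integral_Ioc, ofReal_integral_eq_lintegral_ofReal
      (hf.integrable_norm_pow two_ne_zero) (ae_of_all _ fun y => by positivity)]
  simp only [ENNReal.ofReal_pow, norm_nonneg, ofReal_norm]

lemma fourierCoeff_eq_of_hasSum {T : ℝ} [Fact (0 < T)] {f : C(AddCircle T, ℂ)} {c : ℤ → ℂ}
    (hf : HasSum (fun k => c k • fourier k) f) (n : ℤ) : fourierCoeff f n = c n := by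
  have hinner := (innerSL ℂ (fourierLp (T := T) 2 n)).hasSum
    ((ContinuousMap.toLp (E := ℂ) 2 AddCircle.haarAddCircle ℂ).hasSum hf)
  rw [← fourierCoeff_toLp, ← fourierBasis_repr, HilbertBasis.repr_apply_apply, coe_fourierBasis]
  refine hinner.unique ((hasSum_ite_eq n (c n)).congr_fun fun k => ?_)
  have horth := orthonormal_iff_ite.1 (orthonormal_fourier (T := T)) n k
  rw [map_smul, map_smul, smul_eq_mul, innerSL_apply_apply]
  refine (congrArg (c k * ·) horth).trans ?_
  rcases eq_or_ne k n with rfl | hkn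
  · simp
  · simp [hkn, hkn.symm]

lemma fourierCoeffOn_comp_coe {a b : ℝ} (hab : a < b) [Fact (0 < b - a)]
    (F : AddCircle (b - a) → ℂ) (n : ℤ) :
    fourierCoeffOn hab (fun y => F y) n = fourierCoeff F n := by
  rw [fourierCoeffOn_eq_integral, fourierCoeff_eq_intervalIntegral F n a, add_sub_cancel]

lemma memLp_Icc_of_continuousOn {a b : ℝ} {f : ℝ → ℂ} (hf : ContinuousOn f (Set.Icc a b))
    (p : ℝ≥0∞) : MemLp f p (volume.restrict (Set.Icc a b)) := by
  obtain ⟨M, hM⟩ := isCompact_Icc.exists_bound_of_continuousOn hf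
  exact MemLp.of_bound (hf.aestronglyMeasurable measurableSet_Icc) M
    (ae_restrict_of_forall_mem measurableSet_Icc hM)

lemma lintegral_enorm_tsum_smul_fourier_sq {a b : ℝ} (hab : a < b) {c : ℤ → ℂ}
    (hc : Summable fun k => ‖c k‖) :
    ∫⁻ y in Set.Icc a b, ‖∑' k, c k • fourier k (y : AddCircle (b - a))‖ₑ ^ 2 =
      ENNReal.ofReal (b - a) * ∑' k, ‖c k‖ₑ ^ 2 := by
  have : Fact (0 < b - a) := ⟨sub_pos.2 hab⟩
  have hsum : Summable fun k => c k • (fourier k : C(AddCircle (b - a), ℂ)) :=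
    .of_norm (by simpa only [norm_smul, fourier_norm, mul_one] using hc)
  obtain ⟨F, hF⟩ := hsum
  have heval (y : ℝ) : ∑' k, c k • fourier k (y : AddCircle (b - a)) = F y :=
    (ContinuousMap.hasSum_apply hF (y : AddCircle (b - a))).tsum_eq
  have hcont : Continuous fun y : ℝ => F y := F.continuous.comp (AddCircle.continuous_mk' _)
  have hcoeff (n : ℤ) : fourierCoeffOn hab (fun y : ℝ => F y) n = c n := by
    rw [fourierCoeffOn_comp_coe hab, fourierCoeff_eq_of_hasSum hF]
  simp_rw [heval, lintegral_enorm_sq_eq_tsum_fourierCoeffOn hab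
    (memLp_Icc_of_continuousOn hcont.continuousOn 2), hcoeff]

lemma lintegral_enorm_tsum_exp_mul_sq {c : ℤ → ℂ} (hc : Summable fun k => ‖c k‖) :
    ∫⁻ φ in Set.Icc 0 (2 * π),
        ‖∑' k : ℤ, Complex.exp (-(Complex.I * ((k : ℝ) * φ))) * c k‖ₑ ^ 2 =
      ENNReal.ofReal (2 * π) * ∑' k, ‖c k‖ₑ ^ 2 := by
  have hexp (k : ℤ) (φ : ℝ) : c (-k) • fourier k (φ : AddCircle (2 * π - 0)) =
      Complex.exp (-(Complex.I * (((-k : ℤ) : ℝ) * φ))) * c (-k) := by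
    rw [fourier_coe_apply, smul_eq_mul, mul_comm]
    congr 2
    push_cast
    field_simp [Real.pi_ne_zero]
    ring
  have hparseval := lintegral_enorm_tsum_smul_fourier_sq two_pi_pos
    (hc.comp_injective (neg_injective (G := ℤ)))
  have hcoeff : ∑' k : ℤ, ‖c (-k)‖ₑ ^ 2 = ∑' k, ‖c k‖ₑ ^ 2 :=
    (Equiv.neg ℤ).tsum_eq fun k => ‖c k‖ₑ ^ 2
  simp only [hexp] at hparseval
  rw [sub_zero, hcoeff] at hparseval
  rw [← hparseval]
  congr! 4 with φ
  exact ((Equiv.neg ℤ).tsum_eq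
    (fun k : ℤ => Complex.exp (-(Complex.I * ((k : ℝ) * φ))) * c k)).symm

variable {X : Type} {Ψ : ℝ → ℝ → X → ℝ} {t : ℝ} {x : X}

lemma lintegral_enorm_sq_eq_tsum_azMode (hΨ : Continuous fun φ => Ψ t φ x) :
    ∫⁻ φ in Set.Icc 0 (2 * π), ‖Ψ t φ x‖ₑ ^ 2 =
      ENNReal.ofReal (2 * π) * ∑' k : ℤ, ‖azMode Ψ k t x‖ₑ ^ 2 := by
  have hparseval := lintegral_enorm_sq_eq_tsum_fourierCoeffOn two_pi_pos
    (memLp_Icc_of_continuousOn (Complex.continuous_ofReal.comp hΨ).continuousOn 2)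
  simp only [sub_zero, Function.comp_apply, ← ofReal_norm, Complex.norm_real] at hparseval ⊢
  rw [hparseval, ← (Equiv.neg ℤ).tsum_eq]
  simp only [azMode_eq_fourierCoeffOn, Equiv.neg_apply, Function.comp_def]

end Parseval

lemma hasDerivAt_tsum_exp_mul {c : ℤ → ℂ} (hc : Summable fun k : ℤ => ‖(k : ℂ) * c k‖) (φ : ℝ) :
    HasDerivAt
      (fun φ : ℝ => ∑' k : {k : ℤ // k ≠ 0}, Complex.exp (-(Complex.I * ((k.1 : ℝ) * φ))) * c k.1)
      (∑' k : ℤ, Complex.exp (-(Complex.I * ((k : ℝ) * φ))) * (-(Complex.I * (k : ℝ)) * c k))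
      φ := by
  have hc' : Summable fun k : {k : ℤ // k ≠ 0} => ‖(k.1 : ℂ) * c k.1‖ :=
    hc.comp_injective Subtype.val_injective
  have hterm (k : {k : ℤ // k ≠ 0}) (y : ℝ) :
      HasDerivAt (fun y : ℝ => Complex.exp (-(Complex.I * ((k.1 : ℝ) * y))) * c k.1)
        (Complex.exp (-(Complex.I * ((k.1 : ℝ) * y))) * (-(Complex.I * (k.1 : ℝ)) * c k.1)) y := by
    have hphase : HasDerivAt (fun y : ℝ => -(Complex.I * ((k.1 : ℝ) * (y : ℂ))))
        (-(Complex.I * ((k.1 : ℝ) * 1))) y :=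
      (((Complex.ofRealCLM.hasDerivAt (x := y)).const_mul _).const_mul _).neg
    simpa only [mul_one, mul_assoc] using hphase.cexp.mul_const (c k.1)
  have hbound (k : {k : ℤ // k ≠ 0}) (y : ℝ) :
      ‖Complex.exp (-(Complex.I * ((k.1 : ℝ) * y))) * (-(Complex.I * (k.1 : ℝ)) * c k.1)‖ ≤
        ‖(k.1 : ℂ) * c k.1‖ := by
    rw [norm_mul, norm_exp_neg_I_mul_int_mul, one_mul, norm_mul, norm_neg, norm_mul,
      Complex.norm_I, one_mul, norm_mul, Complex.ofReal_intCast]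
  have hsummable : Summable fun k : {k : ℤ // k ≠ 0} =>
      Complex.exp (-(Complex.I * ((k.1 : ℝ) * (0 : ℝ)))) * c k.1 := by
    refine Summable.of_norm_bounded hc' fun k => ?_
    rw [norm_mul, norm_exp_neg_I_mul_int_mul, one_mul, norm_mul, Complex.norm_intCast]
    exact le_mul_of_one_le_left (norm_nonneg _) (by exact_mod_cast Int.one_le_abs k.2)
  have hseries : ∑' k : ℤ, Complex.exp (-(Complex.I * ((k : ℝ) * φ))) *
      (-(Complex.I * (k : ℝ)) * c k) = ∑' k : {k : ℤ // k ≠ 0},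
        Complex.exp (-(Complex.I * ((k.1 : ℝ) * φ))) * (-(Complex.I * (k.1 : ℝ)) * c k.1) :=
    (tsum_subtype_eq_of_support_subset (s := {k : ℤ | k ≠ 0}) fun k hk hk0 =>
      hk (by simp [hk0])).symm
  rw [hseries]
  exact hasDerivAt_tsum hc' hterm hbound hsummable φ

section LowModes

/-- The `k`-th azimuthal Fourier mode `K_{ω₀|k|} ∗ Ψ_k(·,x)` of the low-frequency part of `Ψ`. -/
noncomputable def lowMode {X : Type} (ζ : ℝ → ℝ) (ω₀ : ℝ) (Ψ : ℝ → ℝ → X → ℝ) (k : ℤ) (t : ℝ)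
    (x : X) : ℂ :=
  lowPassFilter ζ (ω₀ * |(k : ℝ)|) (fun s => azMode Ψ k s x) t

/-- The regularity in the angle, on the slice of a fixed `x ∈ X`, that is needed to differentiate
the series of the low-frequency part term by term: a bounded third angular derivative makes the
modes of the first derivative summable. -/
structure AngularlyRegular (f : ℝ → ℝ → ℝ) : Prop where
  contDiff : ∀ t, ContDiff ℝ 3 (f t)
  periodic : ∀ t, Function.Periodic (f t) (2 * π)
  bounded : ∃ M, ∀ t φ, |iteratedDeriv 3 (f t) φ| ≤ M

variable {X : Type} {Ψ : ℝ → ℝ → X → ℝ} {x : X}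

lemma angularDeriv_iterate_apply (n : ℕ) (Ψ : ℝ → ℝ → X → ℝ) (t φ : ℝ) (x : X) :
    angularDeriv^[n] Ψ t φ x = iteratedDeriv n (fun φ' => Ψ t φ' x) φ := by
  induction n generalizing Ψ with
  | zero => simp
  | succ n ih =>
    rw [Function.iterate_succ_apply, ih, iteratedDeriv_succ']
    rfl

lemma AngularlyRegular.continuous_angularDeriv (hΨ : AngularlyRegular fun t φ => Ψ t φ x)
    (t : ℝ) : Continuous fun φ => angularDeriv Ψ t φ x :=
  (hΨ.contDiff t).continuous_deriv (by norm_num)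

lemma AngularlyRegular.exists_norm_azMode_angularDeriv_le
    (hΨ : AngularlyRegular fun t φ => Ψ t φ x) :
    ∃ M : ℝ, 0 ≤ M ∧ ∀ (k : ℤ) (t : ℝ), k ≠ 0 →
      ‖azMode (angularDeriv Ψ) k t x‖ ≤ M / (k : ℝ) ^ 2 := by
  obtain ⟨M, hM⟩ := hΨ.bounded
  refine ⟨M, (abs_nonneg _).trans (hM 0 0), fun k t hk => ?_⟩
  have hthird : azMode (angularDeriv^[3] Ψ) k t x =
      (-(Complex.I * (k : ℝ))) ^ 2 * azMode (angularDeriv Ψ) k t x := by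
    rw [azMode_angularDeriv_iterate (hΨ.contDiff t) (hΨ.periodic t),
      azMode_angularDeriv ((hΨ.contDiff t).of_le (by norm_num)) (hΨ.periodic t)]
    ring
  have hnorm : ‖azMode (angularDeriv^[3] Ψ) k t x‖ ≤ M :=
    norm_azMode_le (fun φ => by simpa only [angularDeriv_iterate_apply] using hM t φ) k
  rw [hthird, norm_mul, norm_pow, norm_neg, norm_mul, Complex.norm_I, one_mul, Complex.norm_real,
    Real.norm_eq_abs, sq_abs] at hnorm
  rwa [le_div_iff₀' (by positivity)]

lemma lowMode_zero (ζ : ℝ → ℝ) (ω₀ : ℝ) (Ψ : ℝ → ℝ → X → ℝ) (t : ℝ) (x : X) :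
    lowMode ζ ω₀ Ψ 0 t x = 0 := by
  rw [lowMode, Int.cast_zero, abs_zero, mul_zero, lowPassFilter_zero]

lemma AngularlyRegular.lowMode_angularDeriv (hΨ : AngularlyRegular fun t φ => Ψ t φ x)
    (ζ : ℝ → ℝ) (ω₀ : ℝ) (k : ℤ) (t : ℝ) :
    lowMode ζ ω₀ (angularDeriv Ψ) k t x = -(Complex.I * (k : ℝ)) * lowMode ζ ω₀ Ψ k t x := by
  simp only [lowMode, ← lowPassFilter_const_mul,
    azMode_angularDeriv ((hΨ.contDiff _).of_le (by norm_num)) (hΨ.periodic _)]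

variable {ω₀ : ℝ}

lemma AngularlyRegular.summable_norm_lowMode_angularDeriv (ζ : SchwartzMap ℝ ℝ) (hω₀ : 0 < ω₀)
    (hΨ : AngularlyRegular fun t φ => Ψ t φ x) (t : ℝ) :
    Summable fun k => ‖lowMode ζ ω₀ (angularDeriv Ψ) k t x‖ := by
  obtain ⟨C, hC, hkernel⟩ := exists_norm_lowPassKernel_le ζ
  obtain ⟨M, hM, hmode⟩ := hΨ.exists_norm_azMode_angularDeriv_le
  refine .of_nonneg_of_le (fun _ => norm_nonneg _) (fun k => ?_)
    ((Real.summable_one_div_int_pow.2 one_lt_two).mul_left (C * π * M))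
  rcases eq_or_ne k 0 with rfl | hk
  · simp [lowMode_zero]
  have hlam : 0 < ω₀ * |(k : ℝ)| := by positivity
  have hdecay (s : ℝ) : ‖azMode (angularDeriv Ψ) k s x‖ₑ ≤ ENNReal.ofReal (M / (k : ℝ) ^ 2) := by
    rw [← ofReal_norm]
    exact ENNReal.ofReal_le_ofReal (hmode k s hk)
  rw [← ENNReal.ofReal_le_ofReal_iff (by positivity), ofReal_norm]
  calc ‖lowMode ζ ω₀ (angularDeriv Ψ) k t x‖ₑ
      ≤ (∫⁻ u, ‖lowPassKernel ζ (ω₀ * |(k : ℝ)|) u‖ₑ) * ENNReal.ofReal (M / (k : ℝ) ^ 2) :=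
        enorm_convolution_le_of_bound (measurable_lowPassKernel ζ _) hdecay t
    _ ≤ ENNReal.ofReal (C * π) * ENNReal.ofReal (M / (k : ℝ) ^ 2) := by
        gcongr
        exact lintegral_enorm_le_of_norm_le_cauchyProfile hC.le hlam (hkernel _ hlam)
    _ = ENNReal.ofReal (C * π * M * (1 / (k : ℝ) ^ 2)) := by
        rw [← ENNReal.ofReal_mul (by positivity)]
        congr 1
        ring

lemma AngularlyRegular.deriv_lowPart (ζ : SchwartzMap ℝ ℝ) (hω₀ : 0 < ω₀)
    (hΨ : AngularlyRegular fun t φ => Ψ t φ x) (t φ : ℝ) :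
    deriv (fun φ' => lowPart ζ ω₀ Ψ t φ' x) φ =
      ∑' k : ℤ, Complex.exp (-(Complex.I * ((k : ℝ) * φ))) *
        lowMode ζ ω₀ (angularDeriv Ψ) k t x := by
  have hsum : Summable fun k : ℤ => ‖(k : ℂ) * lowMode ζ ω₀ Ψ k t x‖ := by
    simpa only [hΨ.lowMode_angularDeriv, norm_mul, norm_neg, Complex.norm_I, one_mul,
      Complex.ofReal_intCast] using hΨ.summable_norm_lowMode_angularDeriv ζ hω₀ t
  simp only [hΨ.lowMode_angularDeriv]
  exact (hasDerivAt_tsum_exp_mul hsum φ).deriv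

lemma measurable_lowMode (ζ : SchwartzMap ℝ ℝ) (hΨ : Measurable fun p : ℝ × ℝ => Ψ p.1 p.2 x)
    (k : ℤ) : Measurable fun t => lowMode ζ ω₀ Ψ k t x :=
  measurable_lowPassFilter ζ _ (measurable_azMode hΨ k)

lemma lintegral_enorm_lowMode_sq_le (ζ : SchwartzMap ℝ ℝ) {C : ℝ} (hC : 0 ≤ C)
    (hkernel : ∀ lam, 0 < lam → ∀ t, ‖lowPassKernel ζ lam t‖ ≤ C * cauchyProfile lam t)
    (hω₀ : 0 < ω₀) (hΨ : Measurable fun p : ℝ × ℝ => Ψ p.1 p.2 x) (k : ℤ) (τ : ℝ) :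
    ∫⁻ t in Set.Icc (τ - 1) τ, ‖lowMode ζ ω₀ Ψ k t x‖ₑ ^ 2 ≤
      ∑' n : ℤ, windowWeight C (min ω₀ 1) n *
        ∫⁻ t in Set.Icc (τ + n - 1) (τ + n), ‖azMode Ψ k t x‖ₑ ^ 2 := by
  rcases eq_or_ne k 0 with rfl | hk
  · simp [lowMode_zero]
  have hone : (1 : ℝ) ≤ |(k : ℝ)| := by exact_mod_cast Int.one_le_abs hk
  have hlam : ω₀ ≤ ω₀ * |(k : ℝ)| := le_mul_of_one_le_right hω₀.le hone
  exact setLIntegral_enorm_convolution_sq_le_tsum_windowWeight hC (lt_min hω₀ one_pos)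
    (min_le_right _ _) ((min_le_left _ _).trans hlam) (measurable_lowPassKernel ζ _)
    (hkernel _ (hω₀.trans_le hlam)) (measurable_azMode hΨ k) τ

end LowModes

lemma lintegral_lintegral_eq_mul_tsum {α β ι : Type*} [Countable ι] [MeasurableSpace α]
    [MeasurableSpace β] {μ : Measure α} {ν : Measure β} [SFinite μ] [SFinite ν]
    {F : α → β → ℝ≥0∞} {c : ι → α → ℝ≥0∞} {r : ℝ≥0∞} (hF : Measurable (Function.uncurry F))
    (hc : ∀ i, Measurable (c i)) (h : ∀ a, ∫⁻ b, F a b ∂ν = r * ∑' i, c i a) :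
    ∫⁻ b, ∫⁻ a, F a b ∂μ ∂ν = r * ∑' i, ∫⁻ a, c i a ∂μ := by
  rw [← lintegral_lintegral_swap hF.aemeasurable]
  simp_rw [h]
  rw [lintegral_const_mul _ (Measurable.tsum hc),
    lintegral_tsum fun i => (hc i).aemeasurable]

section WindowEnergy

variable {X : Type} {Ψ : ℝ → ℝ → X → ℝ} {x : X} {ω₀ : ℝ}

lemma lintegral_enorm_angularDeriv_sq (hΨ : AngularlyRegular fun t φ => Ψ t φ x)
    (hmeas : Measurable fun p : ℝ × ℝ => angularDeriv Ψ p.1 p.2 x) (s : Set ℝ) :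
    ∫⁻ φ in Set.Icc 0 (2 * π), ∫⁻ t in s, ‖angularDeriv Ψ t φ x‖ₑ ^ 2 =
      ENNReal.ofReal (2 * π) * ∑' k : ℤ, ∫⁻ t in s, ‖azMode (angularDeriv Ψ) k t x‖ₑ ^ 2 :=
  lintegral_lintegral_eq_mul_tsum (hmeas.enorm.pow_const 2)
    (fun k => (measurable_azMode hmeas k).enorm.pow_const 2)
    fun t => lintegral_enorm_sq_eq_tsum_azMode (hΨ.continuous_angularDeriv t)

lemma lintegral_enorm_deriv_lowPart_sq (ζ : SchwartzMap ℝ ℝ) (hω₀ : 0 < ω₀)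
    (hΨ : AngularlyRegular fun t φ => Ψ t φ x)
    (hmeas : Measurable fun p : ℝ × ℝ => angularDeriv Ψ p.1 p.2 x) (s : Set ℝ) :
    ∫⁻ φ in Set.Icc 0 (2 * π), ∫⁻ t in s, ‖deriv (fun φ' => lowPart ζ ω₀ Ψ t φ' x) φ‖ₑ ^ 2 =
      ENNReal.ofReal (2 * π) *
        ∑' k : ℤ, ∫⁻ t in s, ‖lowMode ζ ω₀ (angularDeriv Ψ) k t x‖ₑ ^ 2 := by
  have hmode (k : ℤ) : Measurable fun t => lowMode ζ ω₀ (angularDeriv Ψ) k t x :=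
    measurable_lowMode ζ hmeas k
  have hseries : Measurable fun p : ℝ × ℝ => ∑' k : ℤ,
      Complex.exp (-(Complex.I * ((k : ℝ) * p.2))) * lowMode ζ ω₀ (angularDeriv Ψ) k p.1 x := by
    refine Measurable.tsum fun k => ?_
    have := hmode k
    fun_prop
  simp_rw [hΨ.deriv_lowPart ζ hω₀]
  exact lintegral_lintegral_eq_mul_tsum (hseries.enorm.pow_const 2)
    (fun k => (hmode k).enorm.pow_const 2)
    fun t => lintegral_enorm_tsum_exp_mul_sq (hΨ.summable_norm_lowMode_angularDeriv ζ hω₀ t)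

lemma lintegral_enorm_deriv_lowPart_sq_le (ζ : SchwartzMap ℝ ℝ) {C : ℝ} (hC : 0 ≤ C)
    (hkernel : ∀ lam, 0 < lam → ∀ t, ‖lowPassKernel ζ lam t‖ ≤ C * cauchyProfile lam t)
    (hω₀ : 0 < ω₀) (hΨ : AngularlyRegular fun t φ => Ψ t φ x)
    (hmeas : Measurable fun p : ℝ × ℝ => angularDeriv Ψ p.1 p.2 x) (τ : ℝ) :
    ∫⁻ φ in Set.Icc 0 (2 * π), ∫⁻ t in Set.Icc (τ - 1) τ,
        ‖deriv (fun φ' => lowPart ζ ω₀ Ψ t φ' x) φ‖ₑ ^ 2 ≤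
      ∑' n : ℤ, windowWeight C (min ω₀ 1) n *
        ∫⁻ φ in Set.Icc 0 (2 * π), ∫⁻ t in Set.Icc (τ + n - 1) (τ + n),
          ‖angularDeriv Ψ t φ x‖ₑ ^ 2 := by
  simp_rw [lintegral_enorm_deriv_lowPart_sq ζ hω₀ hΨ hmeas,
    lintegral_enorm_angularDeriv_sq hΨ hmeas, mul_left_comm _ (ENNReal.ofReal (2 * π)),
    ENNReal.tsum_mul_left]
  refine mul_le_mul' le_rfl ?_
  calc ∑' k : ℤ, ∫⁻ t in Set.Icc (τ - 1) τ, ‖lowMode ζ ω₀ (angularDeriv Ψ) k t x‖ₑ ^ 2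
      ≤ ∑' k : ℤ, ∑' n : ℤ, windowWeight C (min ω₀ 1) n *
          ∫⁻ t in Set.Icc (τ + n - 1) (τ + n), ‖azMode (angularDeriv Ψ) k t x‖ₑ ^ 2 :=
        ENNReal.tsum_le_tsum fun k => lintegral_enorm_lowMode_sq_le ζ hC hkernel hω₀ hmeas k τ
    _ = _ := by
        rw [ENNReal.tsum_comm]
        simp_rw [ENNReal.tsum_mul_left]

end WindowEnergy

lemma measurable_lintegral_lintegral {α β γ : Type*} [MeasurableSpace α] [MeasurableSpace β]
    [MeasurableSpace γ] {μ : Measure α} {ν : Measure β} [SFinite μ] [SFinite ν]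
    {g : α × β × γ → ℝ≥0∞} (hg : Measurable g) :
    Measurable fun c => ∫⁻ b, ∫⁻ a, g (a, b, c) ∂μ ∂ν := by
  have hswap : Measurable fun q : (γ × β) × α => g (q.2, q.1.2, q.1.1) := by fun_prop
  exact (hswap.lintegral_prod_right' (ν := μ)).lintegral_prod_right'

lemma lintegral_le_tsum_mul_iSup {X ι T : Type*} [MeasurableSpace X] {μ : Measure X} [Countable ι]
    {f : X → ℝ≥0∞} {w : ι → ℝ≥0∞} {J : T → X → ℝ≥0∞} {σ : ι → T} (hJ : ∀ i, Measurable (J (σ i)))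
    (hf : ∀ x, f x ≤ ∑' i, w i * J (σ i) x) :
    ∫⁻ x, f x ∂μ ≤ (∑' i, w i) * ⨆ τ, ∫⁻ x, J τ x ∂μ :=
  calc ∫⁻ x, f x ∂μ ≤ ∫⁻ x, ∑' i, w i * J (σ i) x ∂μ := lintegral_mono hf
    _ = ∑' i, w i * ∫⁻ x, J (σ i) x ∂μ := by
        rw [lintegral_tsum fun i => ((hJ i).const_mul _).aemeasurable]
        simp_rw [lintegral_const_mul _ (hJ _)]
    _ ≤ ∑' i, w i * ⨆ τ, ∫⁻ x, J τ x ∂μ := by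
        gcongr with i
        exact le_iSup (fun τ => ∫⁻ x, J τ x ∂μ) (σ i)
    _ = _ := ENNReal.tsum_mul_right

section SmoothAngularlyPeriodic

lemma contDiff_iteratedDeriv_of_uncurry {𝕜 E F : Type*} [NontriviallyNormedField 𝕜]
    [NormedAddCommGroup E] [NormedSpace 𝕜 E] [NormedAddCommGroup F] [NormedSpace 𝕜 F]
    {f : E → 𝕜 → F} {m n : ℕ} (hf : ContDiff 𝕜 (m + n) (Function.uncurry f)) :
    ContDiff 𝕜 m fun p : E × 𝕜 => iteratedDeriv n (f p.1) p.2 := by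
  induction n generalizing m with
  | zero => simpa [Function.uncurry_def] using hf
  | succ n ih =>
    have hn : ContDiff 𝕜 ((m + 1 : ℕ)) fun p : E × 𝕜 => iteratedDeriv n (f p.1) p.2 :=
      ih (by convert hf using 1; push_cast; ring)
    have hn' : ContDiff 𝕜 ((m + 1 : ℕ)) (Function.uncurry fun (p : E × 𝕜) (y : 𝕜) =>
        iteratedDeriv n (f p.1) y) :=
      hn.comp (by fun_prop : ContDiff 𝕜 _ fun q : (E × 𝕜) × 𝕜 => (q.1.1, q.2))
    simp only [iteratedDeriv_succ, ← fderiv_apply_one_eq_deriv]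
    exact hn'.fderiv_apply contDiff_snd contDiff_const (by norm_cast)

lemma periodic_iteratedDeriv {𝕜 F : Type*} [NontriviallyNormedField 𝕜] [NormedAddCommGroup F]
    [NormedSpace 𝕜 F] {f : 𝕜 → F} {c : 𝕜} (hf : Function.Periodic f c) (n : ℕ) :
    Function.Periodic (iteratedDeriv n f) c := fun y => by
  rw [← congrFun (iteratedDeriv_comp_add_const n f c) y, hf.funext]

lemma AngularlyRegular.of_contDiff {f : ℝ → ℝ → ℝ} (hf : ContDiff ℝ 3 (Function.uncurry f))
    (hper : ∀ t, Function.Periodic (f t) (2 * π)) {T : ℝ} (hT : ∀ t φ, T < |t| → f t φ = 0) :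
    AngularlyRegular f := by
  refine ⟨fun t => hf.comp (contDiff_prodMk_right t), hper, ?_⟩
  have hcont : Continuous fun p : ℝ × ℝ => iteratedDeriv 3 (f p.1) p.2 :=
    (contDiff_iteratedDeriv_of_uncurry (m := 0) (by simpa using hf)).continuous
  obtain ⟨M, hM⟩ := ((isCompact_Icc (a := -T) (b := T)).prod
    (isCompact_Icc (a := 0) (b := 2 * π))).exists_bound_of_continuousOn hcont.continuousOn
  refine ⟨max M 0, fun t φ => ?_⟩
  rcases le_or_gt |t| T with ht | ht
  · obtain ⟨θ, hθ, heq⟩ := (periodic_iteratedDeriv (hper t) 3).exists_mem_Ico₀ two_pi_pos φ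
    rw [heq]
    exact (hM (t, θ) ⟨abs_le.1 ht, Set.Ico_subset_Icc_self hθ⟩).trans (le_max_left _ _)
  · have hzero : f t = 0 := funext fun φ => hT t φ ht
    simp [hzero]

end SmoothAngularlyPeriodic

theorem angular_derivative_window_bound_lowPart_general (ζ : SchwartzMap ℝ ℝ) :
    ∃ B : ℝ, 0 < B ∧
      ∀ (X : Type) (_ : MeasurableSpace X) (μ : Measure X) (ω₀ : ℝ), 0 < ω₀ →
      ∀ Ψ : ℝ → ℝ → X → ℝ,
        Measurable (fun p : ℝ × ℝ × X => Ψ p.1 p.2.1 p.2.2) →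
        (∀ x, AngularlyRegular fun t φ => Ψ t φ x) →
      ∀ τbar : ℝ,
        ∫⁻ x, (∫⁻ φ in Set.Icc 0 (2 * π), ∫⁻ t in Set.Icc (τbar - 1) τbar,
            ‖deriv (fun φ' => lowPart ζ ω₀ Ψ t φ' x) φ‖ₑ ^ 2) ∂μ ≤
          ENNReal.ofReal (B / min ω₀ 1) *
            ⨆ τtil : ℝ, ∫⁻ x, (∫⁻ φ in Set.Icc 0 (2 * π), ∫⁻ t in Set.Icc (τtil - 1) τtil,
              ‖deriv (fun φ' => Ψ t φ' x) φ‖ₑ ^ 2) ∂μ := by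
  obtain ⟨C, hC, hkernel⟩ := exists_norm_lowPassKernel_le ζ
  have hS : 0 < ∑' n : ℤ, (1 + (n : ℝ) ^ 2)⁻¹ :=
    summable_inv_one_add_sq_int.tsum_pos (fun n => by positivity) 0 (by positivity)
  refine ⟨8 * π * C ^ 2 * ∑' n : ℤ, (1 + (n : ℝ) ^ 2)⁻¹, by positivity,
    fun X _ μ ω₀ hω₀ Ψ hmeas hreg τ => ?_⟩
  have hderiv : Measurable fun p : ℝ × ℝ × X => angularDeriv Ψ p.1 p.2.1 p.2.2 :=
    measurable_angularDeriv hmeas fun t x => ((hreg x).contDiff t).differentiable (by norm_num)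
  have hslice (x : X) : Measurable fun p : ℝ × ℝ => angularDeriv Ψ p.1 p.2 x :=
    hderiv.comp (by fun_prop : Measurable fun p : ℝ × ℝ => (p.1, p.2, x))
  rw [← tsum_windowWeight C (lt_min hω₀ one_pos)]
  exact lintegral_le_tsum_mul_iSup
    (J := fun τ x => ∫⁻ φ in Set.Icc 0 (2 * π), ∫⁻ t in Set.Icc (τ - 1) τ,
      ‖angularDeriv Ψ t φ x‖ₑ ^ 2)
    (σ := fun n : ℤ => τ + n) (fun n => measurable_lintegral_lintegral (hderiv.enorm.pow_const 2))
    fun x => lintegral_enorm_deriv_lowPart_sq_le ζ hC.le hkernel hω₀ (hreg x) (hslice x) τ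

/-- There is `B > 0` (depending only on `ζ`) such that if `ω₀ ≤ 1`, then for every admissible
`Ψ` and every `τ̄ ∈ ℝ`:
`∫_X∫₀^{2π}∫_{τ̄−1}^{τ̄} (∂_φ Ψ_♭)² ≤ B ω₀⁻¹ sup_{τ̃} ∫_X∫₀^{2π}∫_{τ̃−1}^{τ̃} (∂_φ Ψ)²`. -/
theorem angular_derivative_window_bound_lowPart
    (ζ : ℝ → ℝ) (hζ_smooth : ContDiff ℝ (⊤ : ℕ∞) ζ) (hζ_even : ∀ x, ζ (-x) = ζ x)
    (hζ_supp : Function.support ζ ⊆ Set.Icc (-2) 2)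
    (hζ_one : ∀ x ∈ Set.Icc (-1 : ℝ) 1, ζ x = 1) :
    ∃ B : ℝ, 0 < B ∧
      ∀ (X : Type) (_ : MeasurableSpace X) (μ : Measure X), SigmaFinite μ →
      ∀ ω₀ : ℝ, 0 < ω₀ → ω₀ ≤ 1 →
      ∀ Ψ : ℝ → ℝ → X → ℝ,
        -- admissibility: joint measurability
        Measurable (fun p : ℝ × ℝ × X => Ψ p.1 p.2.1 p.2.2) →
        -- admissibility: smoothness in (t, φ) for each fixed x
        (∀ x, ContDiff ℝ (⊤ : ℕ∞) fun p : ℝ × ℝ => Ψ p.1 p.2 x) →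
        -- admissibility: 2π-periodicity in φ
        (∀ t φ x, Ψ t (φ + 2 * Real.pi) x = Ψ t φ x) →
        -- admissibility: compact support in t
        (∃ T : ℝ, ∀ t φ x, T < |t| → Ψ t φ x = 0) →
        -- admissibility: the integrals appearing in the statement are finite
        (∀ τ₁ τ₂ : ℝ,
          (∫⁻ x, (∫⁻ φ in Set.Icc 0 (2 * Real.pi), (∫⁻ t in Set.Icc τ₁ τ₂,
            (‖deriv (fun φ' => lowPart ζ ω₀ Ψ t φ' x) φ‖₊ : ℝ≥0∞) ^ 2)) ∂μ) < ⊤) →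
        (∀ τ₁ τ₂ : ℝ,
          (∫⁻ x, (∫⁻ φ in Set.Icc 0 (2 * Real.pi), (∫⁻ t in Set.Icc τ₁ τ₂,
            (‖deriv (fun φ' => Ψ t φ' x) φ‖₊ : ℝ≥0∞) ^ 2)) ∂μ) < ⊤) →
      ∀ τbar : ℝ,
        (∫⁻ x, (∫⁻ φ in Set.Icc 0 (2 * Real.pi), (∫⁻ t in Set.Icc (τbar - 1) τbar,
            (‖deriv (fun φ' => lowPart ζ ω₀ Ψ t φ' x) φ‖₊ : ℝ≥0∞) ^ 2)) ∂μ)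
          ≤ ENNReal.ofReal (B / ω₀) *
              ⨆ τtil : ℝ, ∫⁻ x, (∫⁻ φ in Set.Icc 0 (2 * Real.pi),
                (∫⁻ t in Set.Icc (τtil - 1) τtil,
                  (‖deriv (fun φ' => Ψ t φ' x) φ‖₊ : ℝ≥0∞) ^ 2)) ∂μ := by
  have hζ_compact : HasCompactSupport ζ := .intro isCompact_Icc fun ω hω =>
    Function.notMem_support.1 fun h => hω (hζ_supp h)
  obtain ⟨B, hB, hbound⟩ :=
    angular_derivative_window_bound_lowPart_general (hζ_compact.toSchwartzMap hζ_smooth)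
  refine ⟨B, hB, fun X _ μ _ ω₀ hω₀ hω₀_le Ψ hmeas hsmooth hper ⟨T, hT⟩ _ _ τbar => ?_⟩
  have hreg (x : X) : AngularlyRegular fun t φ => Ψ t φ x :=
    .of_contDiff ((hsmooth x).of_le (by norm_cast)) (fun t φ => hper t φ x)
      fun t φ => hT t φ x
  have hwindow := hbound X _ μ ω₀ hω₀ Ψ hmeas hreg τbar
  rw [min_eq_left hω₀_le] at hwindow
  exact hwindow
end

section
/- For every real q > 0 there exists a constant B > 0, depending only on q, with the following property. Let λ > 0 and let f : ℝ → ℂ be a Schwartz function whose Fourier transform f̂ vanishes on the interval (−λ, λ). Then for every t ∈ ℝ, |f(t)| ≤ B ∫_ℝ (1 + |log(λ|t−s|)|) (1 + λ|t−s|)^{-q} |f'(s)| ds. -/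
open MeasureTheory Real

/-!
Choose a Schwartz function `φ` with `∫ φ = 1` whose Fourier transform lives in the rescaled
frequency gap of `f`. Then `∫ φ(u) f(t + u/λ) du = 0`, so
`f(t) = -∫ φ(u) (f(t + u/λ) - f(t)) du`. On the segment from `t` to `t + u/λ` the weight
`(1 + λ|t - r|)^{-q}` is at least `(1 + |u|)^{-⌈q⌉}`, whence
`‖f(t + u/λ) - f(t)‖ ≤ (1 + |u|)^{⌈q⌉} ∫ (1 + λ|t - r|)^{-q} ‖f'(r)‖ dr`, and `φ` absorbs the
polynomial factor.
-/

open scoped FourierTransform SchwartzMap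

section Fourier

variable {V E : Type*} [NormedAddCommGroup V] [InnerProductSpace ℝ V] [FiniteDimensional ℝ V]
  [MeasurableSpace V] [BorelSpace V] [NormedAddCommGroup E] [NormedSpace ℂ E]

lemma fourier_comp_smul (f : V → E) {a : ℝ} (ha : a ≠ 0) (ξ : V) :
    𝓕 (fun x ↦ f (a • x)) ξ = |(a ^ Module.finrank ℝ V)⁻¹| • 𝓕 f (a⁻¹ • ξ) := by
  simp only [Real.fourier_eq]
  rw [← Measure.integral_comp_smul volume (fun v ↦ 𝐞 (-inner ℝ v (a⁻¹ • ξ)) • f v) a]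
  simp only [real_inner_smul_left, real_inner_smul_right, inv_mul_cancel_left₀ ha]

lemma fourier_comp_add_right (f : V → E) (t ξ : V) :
    𝓕 (fun x ↦ f (x + t)) ξ = 𝐞 (inner ℝ t ξ) • 𝓕 f ξ :=
  congrFun (VectorFourier.fourierIntegral_comp_add_right 𝐞 volume (innerₗ V) f t) ξ

lemma integral_fourier_smul_comp_smul_add_eq_zero [CompleteSpace E] {ψ : V → ℂ} {f : V → E}
    (hψ : Integrable ψ) (hf : Integrable f) {a : ℝ} (ha : a ≠ 0)
    (hψf : ∀ ξ ∈ Function.support ψ, 𝓕 f (a⁻¹ • ξ) = 0) (t : V) :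
    ∫ u, 𝓕 ψ u • f (a • u + t) = 0 := by
  calc ∫ u, 𝓕 ψ u • f (a • u + t) = ∫ ξ, ψ ξ • 𝓕 (fun u ↦ f (a • u + t)) ξ := by
        simpa using! VectorFourier.integral_fourierIntegral_smul_eq_flip (L := innerₗ V)
          Real.continuous_fourierChar continuous_inner hψ ((hf.comp_add_right t).comp_smul ha)
    _ = ∫ _ : V, (0 : E) := by
        congr with ξ
        rw [fourier_comp_smul (fun y ↦ f (y + t)) ha, fourier_comp_add_right]
        by_cases hξ : ψ ξ = 0
        · rw [hξ, zero_smul]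
        · rw [hψf ξ hξ, smul_zero, smul_zero, smul_zero]
    _ = 0 := integral_zero V E

variable (V) in
lemma exists_schwartzMap_support_subset_integral_fourier_eq_one {r : ℝ} (hr : 0 < r) :
    ∃ ψ : 𝓢(V, ℂ), Function.support ψ ⊆ Metric.ball 0 r ∧ ∫ v, 𝓕 ψ v = 1 := by
  let β : ContDiffBump (0 : V) := ⟨r / 2, r, half_pos hr, half_lt_self hr⟩
  have hsupp : HasCompactSupport fun x ↦ (β x : ℂ) :=
    β.hasCompactSupport.comp_left (g := ((↑) : ℝ → ℂ)) Complex.ofReal_zero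
  let ψ : 𝓢(V, ℂ) := hsupp.toSchwartzMap (Complex.ofRealCLM.contDiff.comp β.contDiff)
  refine ⟨ψ, ?_, ?_⟩
  · rw [← β.support_eq]
    exact fun x hx hβx ↦ hx (congrArg ((↑) : ℝ → ℂ) hβx)
  · calc ∫ v, 𝓕 ψ v = 𝓕⁻ (𝓕 ψ) 0 := by
          rw [SchwartzMap.fourierInv_coe, Real.fourierInv_eq]
          simp
      _ = ψ 0 := by rw [FourierTransform.fourierInv_fourier_eq]
      _ = 1 := congrArg ((↑) : ℝ → ℂ) <|
          β.one_of_mem_closedBall (Metric.mem_closedBall_self β.rIn_pos.le)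

lemma fourierTf_eq_fourier (f : ℝ → ℂ) (ω : ℝ) :
    fourierTf f ω = ((2 * π)⁻¹ : ℝ) * 𝓕 f (ω / (2 * π)) := by
  rw [fourierTf, Real.fourier_real_eq_integral_exp_smul]
  congr 2 with t
  rw [smul_eq_mul, mul_comm]
  congr 2
  push_cast
  field_simp

lemma fourierTf_eq_zero_iff {f : ℝ → ℂ} {ω : ℝ} :
    fourierTf f ω = 0 ↔ 𝓕 f (ω / (2 * π)) = 0 := by
  simp [fourierTf_eq_fourier]

end Fourier

section Weights

variable {E F : Type*} [NormedAddCommGroup E] [NormedSpace ℂ E]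
  [NormedAddCommGroup F] [NormedSpace ℝ F]

lemma integrable_one_add_norm_pow_mul {D : Type*} [NormedAddCommGroup D] [NormedSpace ℝ D]
    [MeasurableSpace D] [BorelSpace D] [SecondCountableTopology D] (μ : Measure D)
    [μ.HasTemperateGrowth] (φ : 𝓢(D, F)) (n : ℕ) :
    Integrable (fun v ↦ (1 + ‖v‖) ^ n * ‖φ v‖) μ := by
  simp only [add_pow, one_pow, one_mul, Finset.sum_mul]
  refine integrable_finsetSum _ fun k _ ↦ ?_
  simpa only [mul_right_comm] using
    (φ.integrable_pow_mul μ (n - k)).mul_const (n.choose k : ℝ)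

lemma norm_le_integral_norm_mul_norm_sub {α : Type*} [MeasurableSpace α] {μ : Measure α}
    [CompleteSpace E] {φ : α → ℂ} {h : α → E} (hφ : ∫ u, φ u ∂μ = 1)
    (hφh : Integrable (fun u ↦ φ u • h u) μ) (hzero : ∫ u, φ u • h u ∂μ = 0) (y : E) :
    ‖y‖ ≤ ∫ u, ‖φ u‖ * ‖h u - y‖ ∂μ := by
  have hφi : Integrable φ μ := .of_integral_ne_zero (hφ ▸ one_ne_zero)
  have hy : ∫ u, φ u • (h u - y) ∂μ = -y := by
    simp only [smul_sub]
    rw [integral_sub hφh (hφi.smul_const y), hzero, integral_smul_const, hφ, one_smul, zero_sub]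
  calc ‖y‖ = ‖∫ u, φ u • (h u - y) ∂μ‖ := by rw [hy, norm_neg]
    _ ≤ ∫ u, ‖φ u • (h u - y)‖ ∂μ := norm_integral_le_integral_norm _
    _ = ∫ u, ‖φ u‖ * ‖h u - y‖ ∂μ := by simp only [norm_smul]

lemma mul_norm_sub_le_integral_mul_norm_deriv {f : ℝ → F} (hf : Differentiable ℝ f)
    {w : ℝ → ℝ} (hw : ∀ r, 0 ≤ w r) (hint : Integrable fun r ↦ w r * ‖deriv f r‖)
    {a b c : ℝ} (hc : 0 < c) (hcw : ∀ r ∈ Set.uIcc a b, c ≤ w r) :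
    c * ‖f b - f a‖ ≤ ∫ r, w r * ‖deriv f r‖ := by
  wlog hab : a ≤ b generalizing a b
  · rw [norm_sub_rev]
    exact this (fun r hr ↦ hcw r (Set.uIcc_comm a b ▸ hr)) (le_of_not_ge hab)
  rw [← le_inv_mul_iff₀ hc]
  calc ‖f b - f a‖ ≤ ∫ r in a..b, c⁻¹ * (w r * ‖deriv f r‖) := by
        refine norm_sub_le_integral_of_norm_deriv_le_of_le hab hf.continuous.continuousOn
          hf.differentiableOn (.of_forall fun r hr ↦ ?_) (hint.const_mul _).intervalIntegrable
        rw [le_inv_mul_iff₀ hc]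
        gcongr
        exact hcw r (Set.Icc_subset_uIcc (Set.Ioo_subset_Icc_self hr))
    _ = c⁻¹ * ∫ r in Set.Ioc a b, w r * ‖deriv f r‖ := by
        rw [intervalIntegral.integral_const_mul, intervalIntegral.integral_of_le hab]
    _ ≤ c⁻¹ * ∫ r, w r * ‖deriv f r‖ := by
        refine mul_le_mul_of_nonneg_left ?_ (inv_nonneg.2 hc.le)
        exact setIntegral_le_integral hint
          (.of_forall fun r ↦ mul_nonneg (hw r) (norm_nonneg _))

lemma inv_one_add_pow_ceil_le_rpow_neg {x y : ℝ} (hx : 0 ≤ x) (hxy : x ≤ y) (q : ℝ) :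
    ((1 + y) ^ ⌈q⌉₊)⁻¹ ≤ (1 + x) ^ (-q) := by
  calc ((1 + y) ^ ⌈q⌉₊)⁻¹ ≤ ((1 + x) ^ ⌈q⌉₊)⁻¹ := by gcongr
    _ = (1 + x) ^ (-(⌈q⌉₊ : ℝ)) := by rw [rpow_neg (by positivity), rpow_natCast]
    _ ≤ (1 + x) ^ (-q) :=
        rpow_le_rpow_of_exponent_le (by linarith) (neg_le_neg (Nat.le_ceil q))

lemma norm_sub_le_pow_mul_integral_rpow_mul_norm_deriv {f : ℝ → F} (hf : Differentiable ℝ f)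
    {q lam t : ℝ} (hlam : 0 ≤ lam)
    (hint : Integrable fun r ↦ (1 + lam * |t - r|) ^ (-q) * ‖deriv f r‖) (s : ℝ) :
    ‖f s - f t‖ ≤
      (1 + lam * |t - s|) ^ ⌈q⌉₊ * ∫ r, (1 + lam * |t - r|) ^ (-q) * ‖deriv f r‖ := by
  rw [← inv_mul_le_iff₀ (by positivity)]
  refine mul_norm_sub_le_integral_mul_norm_deriv hf (fun r ↦ by positivity) hint
    (by positivity) fun r hr ↦ inv_one_add_pow_ceil_le_rpow_neg (by positivity) ?_ q
  gcongr lam * ?_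
  simpa only [abs_sub_comm t] using Set.abs_sub_left_of_mem_uIcc hr

lemma integrable_log_smul {g : ℝ → F} {M : ℝ} (hg : AEStronglyMeasurable g)
    (hM : ∀ x, ‖g x‖ ≤ M) (hxg : Integrable fun x ↦ x • g x) :
    Integrable fun x ↦ log x • g x := by
  have hmeas : AEStronglyMeasurable fun x ↦ log x • g x :=
    measurable_log.aestronglyMeasurable.smul hg
  rw [← integrableOn_univ, ← Set.union_compl_self (Set.uIoc (-1 : ℝ) 1)]
  refine IntegrableOn.union ?_ ?_
  · exact (intervalIntegrable_iff.1 intervalIntegral.intervalIntegrable_log').smul_bdd M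
      hg.restrict (.of_forall hM)
  · refine Integrable.mono hxg.integrableOn hmeas.restrict ?_
    refine ae_restrict_of_forall_mem measurableSet_uIoc.compl fun x hx ↦ ?_
    rw [norm_smul, norm_smul]
    gcongr
    have hx1 : 1 ≤ |x| := by
      by_contra! hlt
      exact hx (Set.mem_uIoc.2 (.inl ⟨(abs_lt.1 hlt).1, (abs_lt.1 hlt).2.le⟩))
    rw [norm_eq_abs, norm_eq_abs, ← log_abs, abs_of_nonneg (log_nonneg hx1)]
    exact log_le_self (abs_nonneg x)

lemma integrable_log_mul_abs_sub_smul (g : 𝓢(ℝ, F)) {lam : ℝ} (hlam : lam ≠ 0) (t : ℝ) :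
    Integrable fun s ↦ log (lam * |t - s|) • g s := by
  let k : ℝ → F := fun x ↦ g (t - lam⁻¹ * x)
  have hk (s : ℝ) : k (lam * (t - s)) = g s := by simp [k, hlam]
  have hsg : Integrable fun s ↦ (lam * (t - s)) • g s := by
    have hid : Integrable fun s ↦ s • g s :=
      (g.integrable_pow_mul volume 1).mono' (by fun_prop) (.of_forall fun s ↦ by simp [norm_smul])
    simpa [mul_smul, sub_smul, Pi.smul_def, Pi.sub_def] using
      ((g.integrable.smul t).sub hid).smul lam
  have hxk : Integrable fun x ↦ x • k x := by
    simpa [k, hlam] using (hsg.comp_sub_left t).comp_mul_left' (inv_ne_zero hlam)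
  have hlog : Integrable fun x ↦ log x • k x :=
    integrable_log_smul (by fun_prop) (fun x ↦ SchwartzMap.norm_le_seminorm ℝ g _) hxk
  convert (hlog.comp_mul_left' hlam).comp_sub_left t using 2 with s
  rw [hk, ← log_abs (lam * |t - s|), ← log_abs (lam * (t - s)), abs_mul, abs_mul, abs_abs]

lemma integrable_rpow_neg_mul {k : ℝ → ℝ} (hk : Integrable k) {q lam : ℝ} (hq : 0 ≤ q)
    (hlam : 0 ≤ lam) (t : ℝ) : Integrable fun s ↦ (1 + lam * |t - s|) ^ (-q) * k s := by
  refine hk.bdd_mul (c := 1) (Measurable.aestronglyMeasurable (by fun_prop))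
    (.of_forall fun s ↦ ?_)
  rw [norm_of_nonneg (by positivity)]
  exact rpow_le_one_of_one_le_of_nonpos (le_add_of_nonneg_right (by positivity)) (neg_nonpos.2 hq)

lemma integrable_one_add_abs_log_mul_rpow_mul_norm (g : 𝓢(ℝ, F)) {q lam : ℝ} (hq : 0 ≤ q)
    (hlam : 0 < lam) (t : ℝ) :
    Integrable fun s ↦
      (1 + |log (lam * |t - s|)|) * (1 + lam * |t - s|) ^ (-q) * ‖g s‖ := by
  have hlog : Integrable fun s ↦ (1 + |log (lam * |t - s|)|) * ‖g s‖ := by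
    simpa [add_mul, norm_smul, Pi.add_def] using
      g.integrable.norm.add (integrable_log_mul_abs_sub_smul g hlam.ne' t).norm
  refine (integrable_rpow_neg_mul hlog hq hlam.le t).congr (.of_forall fun s ↦ ?_)
  ring

lemma integral_rpow_mul_norm_le_integral_one_add_abs_log_mul (g : 𝓢(ℝ, F)) {q lam : ℝ}
    (hq : 0 ≤ q) (hlam : 0 < lam) (t : ℝ) :
    ∫ s, (1 + lam * |t - s|) ^ (-q) * ‖g s‖ ≤
      ∫ s, (1 + |log (lam * |t - s|)|) * (1 + lam * |t - s|) ^ (-q) * ‖g s‖ := by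
  refine integral_mono_of_nonneg (.of_forall fun s ↦ by positivity)
    (integrable_one_add_abs_log_mul_rpow_mul_norm g hq hlam t) (.of_forall fun s ↦ ?_)
  dsimp only
  rw [mul_assoc]
  exact le_mul_of_one_le_left (by positivity) (le_add_of_nonneg_right (abs_nonneg _))

lemma norm_le_mul_integral_rpow_mul_norm_deriv [CompleteSpace E] {φ : ℝ → ℂ}
    (hφ : ∫ u, φ u = 1) {f : ℝ → E} (hf : Differentiable ℝ f) {lam q t : ℝ} (hlam : 0 < lam)
    (hφq : Integrable fun u ↦ (1 + ‖u‖) ^ ⌈q⌉₊ * ‖φ u‖)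
    (hφf : Integrable fun u ↦ φ u • f (lam⁻¹ • u + t))
    (hzero : ∫ u, φ u • f (lam⁻¹ • u + t) = 0)
    (hint : Integrable fun s ↦ (1 + lam * |t - s|) ^ (-q) * ‖deriv f s‖) :
    ‖f t‖ ≤ (∫ u, (1 + ‖u‖) ^ ⌈q⌉₊ * ‖φ u‖) *
      ∫ s, (1 + lam * |t - s|) ^ (-q) * ‖deriv f s‖ := by
  set I := ∫ s, (1 + lam * |t - s|) ^ (-q) * ‖deriv f s‖
  have hdiff (u : ℝ) : ‖f (lam⁻¹ • u + t) - f t‖ ≤ (1 + ‖u‖) ^ ⌈q⌉₊ * I := by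
    simpa [I, abs_mul, abs_of_pos hlam, hlam.ne'] using
      norm_sub_le_pow_mul_integral_rpow_mul_norm_deriv hf hlam.le hint (lam⁻¹ • u + t)
  calc ‖f t‖ ≤ ∫ u, ‖φ u‖ * ‖f (lam⁻¹ • u + t) - f t‖ :=
        norm_le_integral_norm_mul_norm_sub hφ hφf hzero _
    _ ≤ ∫ u, (1 + ‖u‖) ^ ⌈q⌉₊ * ‖φ u‖ * I := by
        refine integral_mono_of_nonneg (.of_forall fun u ↦ by positivity)
          (hφq.mul_const I) (.of_forall fun u ↦ ?_)
        calc ‖φ u‖ * ‖f (lam⁻¹ • u + t) - f t‖ ≤ ‖φ u‖ * ((1 + ‖u‖) ^ ⌈q⌉₊ * I) := by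
              gcongr
              exact hdiff u
          _ = (1 + ‖u‖) ^ ⌈q⌉₊ * ‖φ u‖ * I := by ring
    _ = (∫ u, (1 + ‖u‖) ^ ⌈q⌉₊ * ‖φ u‖) * I := integral_mul_const _ _

end Weights

theorem pointwise_bound_of_high_frequency_general {E : Type*} [NormedAddCommGroup E]
    [NormedSpace ℂ E] [CompleteSpace E] (q : ℝ) :
    ∃ B : ℝ, 0 < B ∧ ∀ lam : ℝ, 0 < lam → ∀ f : ℝ → E, Differentiable ℝ f → Integrable f →
      (∀ ω ∈ Set.Ioo (-lam) lam, 𝓕 f (ω / (2 * π)) = 0) →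
      ∀ t : ℝ, Integrable (fun s ↦ (1 + lam * |t - s|) ^ (-q) * ‖deriv f s‖) →
        ‖f t‖ ≤ B * ∫ s, (1 + lam * |t - s|) ^ (-q) * ‖deriv f s‖ := by
  obtain ⟨ψ, hψ, hφ⟩ := exists_schwartzMap_support_subset_integral_fourier_eq_one ℝ
    (inv_pos.2 two_pi_pos)
  refine ⟨(∫ u, (1 + ‖u‖) ^ ⌈q⌉₊ * ‖𝓕 ψ u‖) + 1,
    add_pos_of_nonneg_of_pos (integral_nonneg fun u ↦ by positivity) one_pos,
    fun lam hlam f hf hfi hgap t hint ↦ ?_⟩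
  have hlam_inv : lam⁻¹ ≠ 0 := inv_ne_zero hlam.ne'
  have hφf : Integrable fun u ↦ 𝓕 ψ u • f (lam⁻¹ • u + t) :=
    ((hfi.comp_add_right t).comp_smul hlam_inv).bdd_smul _ (𝓕 ψ).continuous.aestronglyMeasurable
      (.of_forall fun u ↦ SchwartzMap.norm_le_seminorm ℝ (𝓕 ψ) u)
  have hzero : ∫ u, 𝓕 ψ u • f (lam⁻¹ • u + t) = 0 := by
    refine integral_fourier_smul_comp_smul_add_eq_zero ψ.integrable hfi hlam_inv (fun ξ hξ ↦ ?_) t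
    have hω : 2 * π * (lam * ξ) ∈ Set.Ioo (-lam) lam := by
      have hξ_lt : |ξ| < (2 * π)⁻¹ := by simpa using hψ hξ
      rw [Set.mem_Ioo, ← abs_lt, abs_mul, abs_mul lam, abs_of_pos two_pi_pos, abs_of_pos hlam]
      calc 2 * π * (lam * |ξ|) < 2 * π * (lam * (2 * π)⁻¹) := by gcongr
        _ = lam := by field_simp
    simpa [mul_div_cancel_left₀ _ two_pi_pos.ne'] using hgap _ hω
  refine (norm_le_mul_integral_rpow_mul_norm_deriv hφ hf hlam
    (integrable_one_add_norm_pow_mul volume (𝓕 ψ) ⌈q⌉₊) hφf hzero hint).trans ?_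
  gcongr
  exact le_add_of_nonneg_right zero_le_one

/-- For every `q > 0` there is `B > 0` (depending only on `q`) such that: for every `λ > 0`
and every Schwartz function `f` with `f̂` vanishing on `(-λ, λ)`, for every `t ∈ ℝ`,
`|f(t)| ≤ B ∫_ℝ (1 + |log(λ|t−s|)|) (1 + λ|t−s|)^{-q} |f'(s)| ds`. -/
theorem pointwise_bound_of_high_frequency (q : ℝ) (hq : 0 < q) :
    ∃ B : ℝ, 0 < B ∧ ∀ lam : ℝ, 0 < lam → ∀ f : SchwartzMap ℝ ℂ,
      (∀ ω ∈ Set.Ioo (-lam) lam, fourierTf f ω = 0) →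
      ∀ t : ℝ,
        ‖f t‖ ≤ B * ∫ s : ℝ,
          (1 + |Real.log (lam * |t - s|)|) * (1 + lam * |t - s|) ^ (-q) * ‖deriv (⇑f) s‖ := by
  obtain ⟨B, hB, hbound⟩ := pointwise_bound_of_high_frequency_general (E := ℂ) q
  refine ⟨B, hB, fun lam hlam f hf t ↦ ?_⟩
  have hint := integrable_rpow_neg_mul (SchwartzMap.derivCLM ℂ ℂ f).integrable.norm hq.le hlam.le t
  refine (hbound lam hlam f f.differentiable f.integrable
    (fun ω hω ↦ fourierTf_eq_zero_iff.1 (hf ω hω)) t hint).trans ?_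
  exact mul_le_mul_of_nonneg_left (integral_rpow_mul_norm_le_integral_one_add_abs_log_mul
    (SchwartzMap.derivCLM ℂ ℂ f) hq.le hlam t) hB.le
end
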